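/- arXiv:1709.00464 — 4 statements merged into one kernel-verified Lean document; each statement's English description precedes it below -/
import Mathlib

section
/- Let N⁺ be a finite neighborhood containing two non-collinear movement vectors (i.e., there exist u, v ∈ N⁺ that are not collinear as vectors of ℤ²), and let c be a finite configuration. Then there exists t₀ ∈ ℕ such that F^{t₀}(c) is stable. -/
open Finset

/-- Vertices of the two-dimensional grid. -/
abbrev Vertex := ℤ × ℤ

/-- A configuration assigns a number of grains to each vertex. -/
abbrev Config := Vertex → ℕ

/-- Parallel abelian sandpile dynamics with uniform neighborhood `N`:
`F(c)(v) = c(v) - p·𝟙[c(v) ≥ p] + |{u | v - u ∈ N ∧ c(u) ≥ p}|` with `p = |N|`.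
(The vertices `u` with `v - u ∈ N` are exactly the `v - d` for `d ∈ N`.) -/
def sandF (N : Finset Vertex) (c : Config) : Config := fun v =>
  (c v - if N.card ≤ c v then N.card else 0)
    + (N.filter (fun d => N.card ≤ c (v - d))).card

/-- A configuration is stable when every vertex has fewer than `p = |N|` grains. -/
def Stable (N : Finset Vertex) (c : Config) : Prop := ∀ v, c v < N.card

/-- The set of unstable vertices of a configuration. -/
def Act (N : Finset Vertex) (c : Config) : Set Vertex := {v | N.card ≤ c v}

/-- A configuration is finite when only finitely many vertices carry grains. -/
def FiniteConf (c : Config) : Prop := {v | 0 < c v}.Finite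

/-- A configuration has size `n × m` (positioned at the origin). -/
def HasSize (n m : ℕ) (c : Config) : Prop :=
  ∀ v : Vertex, ¬(0 ≤ v.1 ∧ v.1 < (n : ℤ) ∧ 0 ≤ v.2 ∧ v.2 < (m : ℤ)) → c v = 0

/-- A vector of `E_n`: entries in `{0,1}`, supported on indices `< n`,
with exactly one entry equal to `1`. -/
def IsUnitVec (n : ℕ) (e : ℕ → ℕ) : Prop :=
  (∀ i, e i ≤ 1) ∧ (∀ i, n ≤ i → e i = 0) ∧ (∃! i, e i = 1)

/-- Positioning of a vector on the north border: `N(ē)(x,y) = ē(x)` if `y = 0`. -/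
def confN (n : ℕ) (e : ℕ → ℕ) : Config := fun v =>
  if v.2 = 0 ∧ 0 ≤ v.1 ∧ v.1 < (n : ℤ) then e v.1.toNat else 0

/-- Positioning of a vector on the south border: `S(ē)(x,y) = ē(x)` if `y = n-1`. -/
def confS (n : ℕ) (e : ℕ → ℕ) : Config := fun v =>
  if v.2 = (n : ℤ) - 1 ∧ 0 ≤ v.1 ∧ v.1 < (n : ℤ) then e v.1.toNat else 0

/-- Positioning of a vector on the west border: `W(ē)(x,y) = ē(y)` if `x = 0`. -/
def confW (n : ℕ) (e : ℕ → ℕ) : Config := fun v =>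
  if v.1 = 0 ∧ 0 ≤ v.2 ∧ v.2 < (n : ℤ) then e v.2.toNat else 0

/-- Positioning of a vector on the east border: `E(ē)(x,y) = ē(y)` if `x = n-1`. -/
def confE (n : ℕ) (e : ℕ → ℕ) : Config := fun v =>
  if v.1 = (n : ℤ) - 1 ∧ 0 ≤ v.2 ∧ v.2 < (n : ℤ) then e v.2.toNat else 0

/-- `c` is a transporter from west to east with vectors `w, e`. -/
def TransporterWE (N : Finset Vertex) (n : ℕ) (c : Config) (w e : ℕ → ℕ) : Prop :=
  ∃ t : ℕ, Act N ((sandF N)^[t] (c + confW n w)) = {v : Vertex | confE n e v = 1}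

/-- `c` is a transporter from north to south with vectors `nv, s`. -/
def TransporterNS (N : Finset Vertex) (n : ℕ) (c : Config) (nv s : ℕ → ℕ) : Prop :=
  ∃ t : ℕ, Act N ((sandF N)^[t] (c + confN n nv)) = {v : Vertex | confS n s v = 1}

/-- `c` has west vector `w` isolated to the south. -/
def IsolatedWS (N : Finset Vertex) (n : ℕ) (c : Config) (w : ℕ → ℕ) : Prop :=
  ∀ t : ℕ, ∀ v ∈ Act N ((sandF N)^[t] (c + confW n w)), v.2 ≠ (n : ℤ) - 1

/-- `c` has north vector `nv` isolated to the east. -/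
def IsolatedNE (N : Finset Vertex) (n : ℕ) (c : Config) (nv : ℕ → ℕ) : Prop :=
  ∀ t : ℕ, ∀ v ∈ Act N ((sandF N)^[t] (c + confN n nv)), v.1 ≠ (n : ℤ) - 1

/-- `c` is a crossing configuration of size `n × n` with vectors `nv, e, s, w ∈ E_n`. -/
def CrossingConfig (N : Finset Vertex) (n : ℕ) (c : Config)
    (nv e s w : ℕ → ℕ) : Prop :=
  IsUnitVec n nv ∧ IsUnitVec n e ∧ IsUnitVec n s ∧ IsUnitVec n w ∧
  Stable N c ∧ HasSize n n c ∧
  TransporterWE N n c w e ∧ IsolatedWS N n c w ∧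
  TransporterNS N n c nv s ∧ IsolatedNE N n c nv

/-- A neighborhood can perform crossing when some crossing configuration exists. -/
def CanCross (N : Finset Vertex) : Prop :=
  ∃ (n : ℕ) (c : Config) (nv e s w : ℕ → ℕ), CrossingConfig N n c nv e s w

/-- The neighborhood of a shape `s ⊆ ℝ²` with scaling ratio `r`. -/
def shapeNbhd (s : Set (ℝ × ℝ)) (r : ℝ) : Set Vertex :=
  {v : Vertex | (((v.1 : ℝ) / r, (v.2 : ℝ) / r) : ℝ × ℝ) ∈ s} \ {((0 : ℤ), (0 : ℤ))}

/-- A set `s ⊆ ℝ²` is non-flat when every point of `s` is a vertex of a triangle of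
strictly positive area (three non-collinear points) entirely contained in `s`. -/
def NonFlat (s : Set (ℝ × ℝ)) : Prop :=
  ∀ x ∈ s, ∃ b c : ℝ × ℝ, ¬ Collinear ℝ ({x, b, c} : Set (ℝ × ℝ)) ∧
    convexHull ℝ ({x, b, c} : Set (ℝ × ℝ)) ⊆ s

/-
The number of grains is conserved. Choose a linear form `φ` which sums to `0` over the movement
vectors but is nonzero on one of them, so that it takes both signs. Firing a vertex then increases
the total of `φ²` over the grains by the positive constant `∑ d ∈ N, φ d ^ 2`. On the other hand `φ`
stays bounded on the grains: a strip `a ≤ φ < a + w` that is wide compared with the jumps is never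
emptied, because a vertex in its lower half sends a grain up within the strip, and one in its upper
half sends a grain down. Hence no strip between the initial grains and the farthest grain is empty,
and the number of grains bounds the distance. So the total of `φ²` is bounded, and only finitely
many firings occur.
-/

lemma exists_linearMap_eq_zero_and_ne_zero {R : Type*} [CommRing R] [IsDomain R] {u v : R × R}
    (huv : u.1 * v.2 ≠ u.2 * v.1) (s : R × R) :
    ∃ φ : R × R →ₗ[R] R, φ s = 0 ∧ (φ u ≠ 0 ∨ φ v ≠ 0) := by
  let cross (t : R × R) : R × R →ₗ[R] R :=
    t.1 • LinearMap.snd R R R - t.2 • LinearMap.fst R R R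
  have cross_apply (t w : R × R) : cross t w = t.1 * w.2 - t.2 * w.1 := rfl
  by_cases hs : s = 0
  · exact ⟨cross u, by rw [hs, map_zero], Or.inr (by rwa [cross_apply, sub_ne_zero])⟩
  · refine ⟨cross s, by rw [cross_apply]; ring, ?_⟩
    by_contra! h
    rw [cross_apply, cross_apply] at h
    obtain ⟨hu, hv⟩ := h
    have hdet : u.1 * v.2 - u.2 * v.1 ≠ 0 := sub_ne_zero.2 huv
    refine hs (Prod.ext ?_ ?_)
    · exact (mul_eq_zero_iff_right hdet).1 (by linear_combination u.1 * hv - v.1 * hu)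
    · exact (mul_eq_zero_iff_right hdet).1 (by linear_combination u.2 * hv - v.2 * hu)

section Firing

variable {N : Finset Vertex} {c : Config}

lemma FiniteConf.translate (hc : FiniteConf c) (d : Vertex) : FiniteConf fun v => c (v - d) :=
  Set.Finite.preimage (s := {v | 0 < c v}) sub_left_injective.injOn hc

/-- The configuration with one grain on each unstable vertex of `c`: the vertices fired by a step
of `sandF`. -/
def firing (N : Finset Vertex) (c : Config) : Config := fun v => if N.card ≤ c v then 1 else 0

lemma sandF_add_card_mul_firing (v : Vertex) :
    sandF N c v + N.card * firing N c v = c v + ∑ d ∈ N, firing N c (v - d) := by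
  simp only [sandF, firing, card_filter]
  split_ifs with h <;> omega

lemma firing_pos_iff {v : Vertex} : 0 < firing N c v ↔ N.card ≤ c v := by
  unfold firing
  split_ifs with h <;> simp [h]

lemma FiniteConf.firing (hN : N.Nonempty) (hc : FiniteConf c) : FiniteConf (firing N c) :=
  Set.Finite.subset hc fun _ hv => hN.card_pos.trans_le (firing_pos_iff.1 hv)

lemma exists_firing_pos_of_not_stable (h : ¬ Stable N c) : ∃ v, 0 < firing N c v := by
  simpa only [Stable, not_forall, not_lt, ← firing_pos_iff] using h

lemma sandF_pos_of_lt_card {v : Vertex} (hv : 0 < c v) (hlt : c v < N.card) :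
    0 < sandF N c v := by
  simp only [sandF, hlt.not_ge, if_false]
  omega

lemma sandF_add_pos_of_card_le {v d : Vertex} (hv : N.card ≤ c v) (hd : d ∈ N) :
    0 < sandF N c (v + d) := by
  have hreceived : 0 < (N.filter fun e => N.card ≤ c (v + d - e)).card :=
    card_pos.2 ⟨d, by simp [hd, hv]⟩
  exact Nat.add_pos_right _ hreceived

lemma exists_pos_of_sandF_pos (hN : N.Nonempty) {v : Vertex} (hv : 0 < sandF N c v) :
    0 < c v ∨ ∃ d ∈ N, 0 < c (v - d) := by
  rcases Nat.add_pos_iff_pos_or_pos.1 hv with h | h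
  · exact Or.inl (by omega)
  · obtain ⟨d, hd⟩ := card_pos.1 h
    rw [mem_filter] at hd
    exact Or.inr ⟨d, hd.1, hN.card_pos.trans_le hd.2⟩

lemma FiniteConf.sandF (hN : N.Nonempty) (hc : FiniteConf c) : FiniteConf (sandF N c) := by
  refine (hc.union (hc.image2 (· + ·) N.finite_toSet)).subset fun v hv => ?_
  rcases exists_pos_of_sandF_pos hN hv with h | ⟨d, hd, h⟩
  · exact Or.inl h
  · exact Or.inr ⟨v - d, h, d, hd, sub_add_cancel v d⟩

lemma FiniteConf.iterate_sandF (hN : N.Nonempty) (hc : FiniteConf c) (t : ℕ) :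
    FiniteConf ((_root_.sandF N)^[t] c) :=
  Function.Iterate.rec FiniteConf hc (fun _ => FiniteConf.sandF hN) t

end Firing

section GrainSum

/-- The total of `f` over the grains of `c`. As a `finsum`, it is meaningful for finite
configurations. -/
noncomputable def grainSum {M : Type*} [AddCommMonoid M] (c : Config) (f : Vertex → M) : M :=
  ∑ᶠ v, c v • f v

variable {N : Finset Vertex} {c : Config}

lemma FiniteConf.hasFiniteSupport_smul {M : Type*} [AddMonoid M] (hc : FiniteConf c)
    (f : Vertex → M) : (fun v => c v • f v).HasFiniteSupport :=
  Set.Finite.subset hc fun v hv => Nat.pos_of_ne_zero fun h => hv (by simp only [h, zero_smul])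

lemma grainSum_mono {M : Type*} [AddCommMonoid M] [PartialOrder M] [IsOrderedAddMonoid M]
    (hc : FiniteConf c) {f g : Vertex → M} (hfg : ∀ v, 0 < c v → f v ≤ g v) :
    grainSum c f ≤ grainSum c g := by
  refine finsum_le_finsum' (hc.hasFiniteSupport_smul f) (hc.hasFiniteSupport_smul g) fun v => ?_
  rcases Nat.eq_zero_or_pos (c v) with hv | hv
  · simp only [hv, zero_smul, le_refl]
  · exact nsmul_le_nsmul_right (hfg v hv) (c v)

lemma grainSum_pos {M : Type*} [AddCommMonoid M] [PartialOrder M] [IsOrderedCancelAddMonoid M]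
    (hc : FiniteConf c) {f : Vertex → M} (hf : ∀ v, 0 < f v) (hpos : ∃ v, 0 < c v) :
    0 < grainSum c f :=
  finsum_pos (fun v => nsmul_nonneg (hf v).le _)
    (hpos.imp fun v hv => nsmul_pos (hf v) hv.ne') (hc.hasFiniteSupport_smul f)

lemma card_toFinset_le_grainSum_one (hc : FiniteConf c) :
    (hc.toFinset.card : ℤ) ≤ grainSum c (fun _ => 1) := by
  have hsum : grainSum c (fun _ => (1 : ℤ)) = ∑ v ∈ hc.toFinset, (c v : ℤ) := by
    have hsupp : (Function.support fun v => c v • (1 : ℤ)) ⊆ hc.toFinset := by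
      intro v hv
      simpa [Nat.pos_iff_ne_zero] using hv
    simpa only [grainSum, nsmul_one] using finsum_eq_sum_of_support_subset _ hsupp
  rw [hsum, ← nsmul_one]
  exact card_nsmul_le_sum _ _ _ fun v hv => by exact_mod_cast hc.mem_toFinset.1 hv

lemma grainSum_translate {M : Type*} [AddCommMonoid M] (f : Vertex → M) (d : Vertex) :
    grainSum (fun v => c (v - d)) f = grainSum c fun v => f (v + d) := by
  unfold grainSum
  rw [← finsum_comp_equiv (Equiv.addRight d)]
  simp only [Equiv.coe_addRight, add_sub_cancel_right]

lemma grainSum_sandF {M : Type*} [AddCommGroup M] (hN : N.Nonempty) (hc : FiniteConf c)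
    (f : Vertex → M) :
    grainSum (sandF N c) f =
      grainSum c f + grainSum (firing N c) fun v => ∑ d ∈ N, (f (v + d) - f v) := by
  have hfiring (g : Vertex → M) : (fun v => firing N c v • g v).HasFiniteSupport :=
    (hc.firing hN).hasFiniteSupport_smul g
  have hshift (d : Vertex) : (fun v => firing N c (v - d) • f v).HasFiniteSupport :=
    ((hc.firing hN).translate d).hasFiniteSupport_smul f
  have hpointwise (v : Vertex) : sandF N c v • f v - c v • f v =
      ∑ d ∈ N, (firing N c (v - d) • f v - firing N c v • f v) := by
    rw [sum_sub_distrib, ← sum_smul, sum_const, smul_smul, sub_eq_sub_iff_add_eq_add, ← add_smul,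
      ← add_smul, sandF_add_card_mul_firing, add_comm]
  rw [← sub_eq_iff_eq_add']
  calc grainSum (sandF N c) f - grainSum c f
      = ∑ᶠ v, (sandF N c v • f v - c v • f v) :=
        (finsum_sub_distrib ((hc.sandF hN).hasFiniteSupport_smul f)
          (hc.hasFiniteSupport_smul f)).symm
    _ = ∑ d ∈ N, ∑ᶠ v, (firing N c (v - d) • f v - firing N c v • f v) := by
        rw [finsum_congr hpointwise]
        exact finsum_sum_comm _ _ fun d _ => (hshift d).sub (hfiring f)
    _ = ∑ d ∈ N, ∑ᶠ v, firing N c v • (f (v + d) - f v) := by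
        refine sum_congr rfl fun d _ => ?_
        simp only [smul_sub]
        rw [finsum_sub_distrib (hshift d) (hfiring f), finsum_sub_distrib (hfiring _) (hfiring f)]
        exact congrArg (· - _) (grainSum_translate f d)
    _ = grainSum (firing N c) fun v => ∑ d ∈ N, (f (v + d) - f v) := by
        rw [← finsum_sum_comm _ _ fun _ _ => hfiring _]
        simp only [grainSum, smul_sum]

lemma grainSum_const_iterate_sandF {M : Type*} [AddCommGroup M] (hN : N.Nonempty)
    (hc : FiniteConf c) (m : M) (t : ℕ) :
    grainSum ((sandF N)^[t] c) (fun _ => m) = grainSum c fun _ => m := by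
  induction t with
  | zero => rfl
  | succ t ih =>
    rw [Function.iterate_succ_apply', grainSum_sandF hN (hc.iterate_sandF hN t), ih]
    simp [grainSum]

lemma grainSum_sq_sandF {R : Type*} [CommRing R] (hN : N.Nonempty) {φ : Vertex →+ R}
    (hφ : ∑ d ∈ N, φ d = 0) (hc : FiniteConf c) :
    grainSum (sandF N c) (fun v => φ v ^ 2) =
      grainSum c (fun v => φ v ^ 2) + grainSum (firing N c) fun _ => ∑ d ∈ N, φ d ^ 2 := by
  have hlaplacian (v : Vertex) :
      ∑ d ∈ N, (φ (v + d) ^ 2 - φ v ^ 2) = ∑ d ∈ N, φ d ^ 2 := by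
    calc ∑ d ∈ N, (φ (v + d) ^ 2 - φ v ^ 2)
        = ∑ d ∈ N, (2 * φ v * φ d + φ d ^ 2) :=
          sum_congr rfl fun d _ => by rw [map_add]; ring
      _ = ∑ d ∈ N, φ d ^ 2 := by rw [sum_add_distrib, ← mul_sum, hφ, mul_zero, zero_add]
  simp only [grainSum_sandF hN hc, hlaplacian]

end GrainSum

section Strips

/-- Some grain of `c` lies in the strip `a ≤ φ < a + w`. -/
def StripOccupied (φ : Vertex →+ ℤ) (a w : ℤ) (c : Config) : Prop :=
  ∃ v, 0 < c v ∧ φ v ∈ Set.Ico a (a + w)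

variable {N : Finset Vertex} {φ : Vertex →+ ℤ} {c : Config}

lemma le_grainSum_one_of_stripOccupied (hc : FiniteConf c) {a w : ℤ} (hw : 0 < w) {n : ℕ}
    (hocc : ∀ k < n, StripOccupied φ (a + k * w) w c) : n ≤ grainSum c (fun _ => (1 : ℤ)) := by
  have hsurj : Set.SurjOn (fun v => (φ v - a) / w) hc.toFinset
      ((range n).image ((↑) : ℕ → ℤ)) := by
    intro _ hmem
    obtain ⟨k, hk, rfl⟩ := mem_image.1 (mem_coe.1 hmem)
    obtain ⟨v, hv, hle, hlt⟩ := hocc k (mem_range.1 hk)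
    exact ⟨v, hc.mem_toFinset.2 hv, (Int.ediv_eq_iff_of_pos hw).2 ⟨by linarith, by linarith⟩⟩
  have hcard := card_le_card_of_surjOn _ hsurj
  rw [card_image_of_injective _ Nat.cast_injective, card_range] at hcard
  exact (Nat.cast_le.2 hcard).trans (card_toFinset_le_grainSum_one hc)

variable (hpos : ∃ d ∈ N, 0 < φ d) (hneg : ∃ d ∈ N, φ d < 0)
include hpos hneg

lemma StripOccupied.sandF {a B : ℤ} (hB : ∀ d ∈ N, |φ d| ≤ B)
    (h : StripOccupied φ a (2 * B) c) :
    StripOccupied φ a (2 * B) (sandF N c) := by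
  obtain ⟨v, hv, hle, hlt⟩ := h
  rcases lt_or_ge (c v) N.card with hstable | hunstable
  · exact ⟨v, sandF_pos_of_lt_card hv hstable, hle, hlt⟩
  · obtain ⟨d, hd, hmem⟩ : ∃ d ∈ N, φ v + φ d ∈ Set.Ico a (a + 2 * B) := by
      rcases lt_or_ge (φ v) (a + B) with hlower | hupper
      · obtain ⟨d, hd, hd_pos⟩ := hpos
        have hjump := (abs_le.1 (hB d hd)).2
        exact ⟨d, hd, by constructor <;> linarith⟩
      · obtain ⟨d, hd, hd_neg⟩ := hneg
        have hjump := (abs_le.1 (hB d hd)).1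
        exact ⟨d, hd, by constructor <;> linarith⟩
    exact ⟨v + d, sandF_add_pos_of_card_le hunstable hd, by rwa [map_add]⟩

lemma stripOccupied_iterate_sandF {a B : ℤ} (hB : ∀ d ∈ N, |φ d| ≤ B)
    (hc : ∀ v, 0 < c v → φ v < a) (t : ℕ) :
    (∃ v, 0 < (sandF N)^[t] c v ∧ a ≤ φ v) → StripOccupied φ a (2 * B) ((sandF N)^[t] c) := by
  induction t with
  | zero =>
    rintro ⟨v, hv, hav⟩
    exact absurd (hc v hv) hav.not_gt
  | succ t ih =>
    rw [Function.iterate_succ_apply']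
    rintro ⟨v, hv, hav⟩
    by_cases hbeyond : ∃ w, 0 < (sandF N)^[t] c w ∧ a ≤ φ w
    · exact (ih hbeyond).sandF hpos hneg hB
    · push Not at hbeyond
      rcases exists_pos_of_sandF_pos (hpos.imp fun _ => And.left) hv with hv' | ⟨d, hd, hv'⟩
      · exact absurd (hbeyond v hv') hav.not_gt
      · have hsource := hbeyond _ hv'
        rw [map_sub] at hsource
        have hjump := abs_le.1 (hB d hd)
        exact ⟨v, hv, hav, by linarith⟩

lemma exists_forall_iterate_sandF_lt (hc : FiniteConf c) :
    ∃ K : ℤ, ∀ t v, 0 < (sandF N)^[t] c v → φ v < K := by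
  have hN : N.Nonempty := hpos.imp fun _ => And.left
  obtain ⟨B, hB⟩ : ∃ B, ∀ d ∈ N, |φ d| ≤ B := by
    simpa only [forall_mem_image] using (N.image fun d => |φ d|).exists_le
  have hB_pos : 0 < B := by
    obtain ⟨d, hd, hd_pos⟩ := hpos
    exact hd_pos.trans_le ((le_abs_self _).trans (hB d hd))
  obtain ⟨a, ha⟩ : ∃ a, ∀ v, 0 < c v → φ v < a := by
    obtain ⟨b, hb⟩ := (hc.image φ).bddAbove
    exact ⟨b + 1, fun v hv => Int.lt_add_one_of_le (hb ⟨v, hv, rfl⟩)⟩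
  set G := (grainSum c fun _ => (1 : ℤ)).toNat
  refine ⟨a + G * (2 * B), fun t v hv => ?_⟩
  by_contra! hfar
  have hocc (k : ℕ) (hk : k < G + 1) :
      StripOccupied φ (a + k * (2 * B)) (2 * B) ((sandF N)^[t] c) := by
    have hkG : k * (2 * B) ≤ G * (2 * B) := by gcongr; omega
    have hk_nonneg : 0 ≤ k * (2 * B) := by positivity
    exact stripOccupied_iterate_sandF hpos hneg hB (fun w hw => by linarith [ha w hw]) t
      ⟨v, hv, by linarith⟩
  have hcount := le_grainSum_one_of_stripOccupied (hc.iterate_sandF hN t) (by positivity) hocc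
  rw [grainSum_const_iterate_sandF hN hc] at hcount
  omega

lemma exists_forall_iterate_sandF_abs_lt (hc : FiniteConf c) :
    ∃ K : ℤ, ∀ t v, 0 < (sandF N)^[t] c v → |φ v| < K := by
  obtain ⟨K, hK⟩ := exists_forall_iterate_sandF_lt hpos hneg hc
  obtain ⟨L, hL⟩ := exists_forall_iterate_sandF_lt (φ := -φ) (by simpa using hneg)
    (by simpa using hpos) hc
  exact ⟨max K L, fun t v hv =>
    max_lt ((hK t v hv).trans_le (le_max_left K L)) ((hL t v hv).trans_le (le_max_right K L))⟩

end Strips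

theorem stmt_1_general (N : Finset Vertex) (φ : Vertex →+ ℤ) (hφ : ∑ d ∈ N, φ d = 0)
    (hne : ∃ d ∈ N, φ d ≠ 0) (c : Config) (hc : FiniteConf c) :
    ∃ t₀ : ℕ, Stable N ((sandF N)^[t₀] c) := by
  have hN : N.Nonempty := hne.imp fun _ => And.left
  have hpos : ∃ d ∈ N, 0 < φ d := exists_pos_of_sum_zero_of_exists_nonzero _ hφ hne
  have hneg : ∃ d ∈ N, φ d < 0 := by
    simpa using exists_pos_of_sum_zero_of_exists_nonzero (s := N) (fun d => -φ d)
      (by simpa using hφ) (by simpa using hne)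
  obtain ⟨K, hK⟩ := exists_forall_iterate_sandF_abs_lt hpos hneg hc
  have hbounded : BddAbove (Set.range fun t => grainSum ((sandF N)^[t] c) fun v => φ v ^ 2) := by
    refine ⟨grainSum c fun _ => K ^ 2, Set.forall_mem_range.2 fun t => ?_⟩
    rw [← grainSum_const_iterate_sandF hN hc _ t]
    exact grainSum_mono (hc.iterate_sandF hN t) fun v hv =>
      (sq_lt_sq.2 ((hK t v hv).trans_le (le_abs_self K))).le
  by_contra! hunstable
  refine StrictMono.not_bddAbove_range_of_isSuccArchimedean
    (strictMono_nat_of_lt_succ fun t => ?_) hbounded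
  have hct := hc.iterate_sandF hN t
  obtain ⟨d, hd, hd_ne⟩ := hne
  have hgain : 0 < ∑ d ∈ N, φ d ^ 2 := sum_pos' (fun _ _ => sq_nonneg _) ⟨d, hd, by positivity⟩
  rw [Function.iterate_succ_apply', grainSum_sq_sandF hN hφ hct]
  exact lt_add_of_pos_right _ (grainSum_pos (hct.firing hN) (fun _ => hgain)
    (exists_firing_pos_of_not_stable (hunstable t)))

/-- with two non-collinear movement vectors, any finite configuration
stabilizes after finitely many parallel steps. -/
theorem stmt_1 (N : Finset Vertex) (h0 : ((0 : ℤ), (0 : ℤ)) ∉ N)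
    (u v : Vertex) (hu : u ∈ N) (hv : v ∈ N) (hcol : u.1 * v.2 ≠ u.2 * v.1)
    (c : Config) (hc : FiniteConf c) :
    ∃ t₀ : ℕ, Stable N ((sandF N)^[t₀] c) := by
  obtain ⟨φ, hφ, hne⟩ := exists_linearMap_eq_zero_and_ne_zero hcol (∑ d ∈ N, d)
  exact stmt_1_general N φ.toAddMonoidHom (by simpa using hφ)
    (hne.elim (⟨u, hu, ·⟩) (⟨v, hv, ·⟩)) c hc
end

section
/- For the abelian sandpile model on ℤ² with a finite uniform neighborhood N⁺: if there exists a crossing configuration, then there exists a crossing configuration c' (for some size n and some vectors n̄,ē,s̄,w̄ ∈ E_n) whose two firing graphs are vertex-disjoint, i.e., the set V_we of vertices fired during the evolution from c' + W(w̄) and the set V_ns of vertices fired during the evolution from c' + N(n̄) satisfy V_we ∩ V_ns = ∅. -/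
open Finset

/-! A grain dropped at the western entry fires a set `V`, one dropped at the northern entry a set
`V'`. On `A = V \ V'` put as many grains as possible so that `A` stays stable when all of
`B = V' \ V` fires; these extra grains make up for those which `V ∩ V'` used to send, so that the
western grain now fires all of `A`. Doing the same on `B` separates the two firing sets.

This changes the firing times, but the exit `e` has to fire alone at some time. So grains are kept
only on the vertices that influence the firing time of `e`, and on those enclosed by them. All of
these fire strictly before `e`: the neighborhood is not contained in a line, so for any other vertex
`v` some linear functional that is larger at `v` than at `e` attains a nonpositive minimum over the
neighborhood at some `a`, and the ray `v, v - a, v - 2a, …` meets the ancestors of `e` too early. -/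

section InDegree

variable {N : Finset Vertex} {X Y : Set Vertex} {v : Vertex}

open Classical in
/-- The number of in-neighbors of `v` lying in `X`, that is, the number of grains that `v` receives
when every vertex of `X` fires once. -/
noncomputable def inDeg (N : Finset Vertex) (X : Set Vertex) (v : Vertex) : ℕ :=
  #{d ∈ N | v - d ∈ X}

lemma inDeg_le_inDeg (h : ∀ d ∈ N, v - d ∈ X → v - d ∈ Y) : inDeg N X v ≤ inDeg N Y v := by
  classical
  exact card_le_card fun d hd => by
    rw [mem_filter] at hd ⊢
    exact ⟨hd.1, h d hd.1 hd.2⟩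

lemma inDeg_mono (h : X ⊆ Y) : inDeg N X v ≤ inDeg N Y v :=
  inDeg_le_inDeg fun _ _ hd => h hd

lemma inDeg_le_card : inDeg N X v ≤ #N := by
  classical
  exact card_filter_le _ _

lemma inDeg_pos_iff : 0 < inDeg N X v ↔ ∃ d ∈ N, v - d ∈ X := by
  simp only [inDeg, card_pos, filter_nonempty_iff]

lemma card_le_inDeg_iff : #N ≤ inDeg N X v ↔ ∀ d ∈ N, v - d ∈ X := by
  classical
  rw [inDeg_le_card.ge_iff_eq, inDeg, card_filter_eq_iff]

@[simp] lemma inDeg_empty : inDeg N ∅ v = 0 := by simp [inDeg]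

lemma inDeg_inter_add_inDeg_sdiff (X Y : Set Vertex) :
    inDeg N (X ∩ Y) v + inDeg N (X \ Y) v = inDeg N X v := by
  classical
  simp only [inDeg, Set.mem_inter_iff, Set.mem_sdiff, ← filter_filter]
  exact card_filter_add_card_filter_not _

lemma inDeg_union_le : inDeg N (X ∪ Y) v ≤ inDeg N X v + inDeg N Y v := by
  classical
  simp only [inDeg, Set.mem_union, filter_or]
  exact card_union_le _ _

lemma sandF_apply (N : Finset Vertex) (c : Config) (v : Vertex) :
    sandF N c v = (c v - if #N ≤ c v then #N else 0) + inDeg N (Act N c) v := by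
  simp only [sandF, inDeg, Act, Set.mem_ofPred_eq]
  congr

end InDegree

section Fired

variable {N : Finset Vertex} {c c' : Config} {A : Set Vertex} {v : Vertex} {t : ℕ}

/-- The set of vertices that have fired before time `t`, in the process where every vertex may fire
only once. It agrees with the sandpile dynamics for the configurations satisfying `FiresOnce`. -/
def firedBefore (N : Finset Vertex) (c : Config) : ℕ → Set Vertex
  | 0 => ∅
  | t + 1 => {v | #N ≤ c v + inDeg N (firedBefore N c t) v}

/-- The set of vertices that fire at some time, in the process where every vertex may fire only
once. -/
def fired (N : Finset Vertex) (c : Config) : Set Vertex := ⋃ t, firedBefore N c t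

lemma notMem_firedBefore_zero : v ∉ firedBefore N c 0 := id

lemma mem_firedBefore_succ :
    v ∈ firedBefore N c (t + 1) ↔ #N ≤ c v + inDeg N (firedBefore N c t) v := Iff.rfl

lemma firedBefore_mono : Monotone (firedBefore N c) := by
  refine monotone_nat_of_le_succ fun t => ?_
  induction t with
  | zero => exact Set.empty_subset _
  | succ t ih => exact fun v hv => hv.trans (Nat.add_le_add_left (inDeg_mono ih) _)

lemma firedBefore_subset_fired : firedBefore N c t ⊆ fired N c := Set.subset_iUnion _ t

lemma exists_mem_firedBefore_sdiff (h : v ∈ fired N c) :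
    ∃ t, v ∈ firedBefore N c (t + 1) \ firedBefore N c t := by
  obtain ⟨t, ht, ht'⟩ := Nat.exists_not_and_succ_of_not_zero_of_exists
    notMem_firedBefore_zero (Set.mem_iUnion.1 h)
  exact ⟨t, ht', ht⟩

lemma mem_fired_iff : v ∈ fired N c ↔ #N ≤ c v + inDeg N (fired N c) v := by
  constructor
  · intro h
    obtain ⟨t, ht, -⟩ := exists_mem_firedBefore_sdiff h
    exact ht.trans (Nat.add_le_add_left (inDeg_mono firedBefore_subset_fired) _)
  · intro h
    have exists_time (d : Vertex) : ∃ t, v - d ∈ fired N c → v - d ∈ firedBefore N c t := by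
      by_cases hd : v - d ∈ fired N c
      · exact (Set.mem_iUnion.1 hd).imp fun _ ht _ => ht
      · exact ⟨0, fun h => absurd h hd⟩
    choose T hT using exists_time
    have hle : inDeg N (fired N c) v ≤ inDeg N (firedBefore N c (N.sup T)) v :=
      inDeg_le_inDeg fun d hdN hd => firedBefore_mono (le_sup hdN) (hT d hd)
    exact firedBefore_subset_fired (mem_firedBefore_succ.2 (h.trans (Nat.add_le_add_left hle _)))

lemma fired_subset (h : ∀ v ∉ A, c v + inDeg N A v < #N) : fired N c ⊆ A := by
  refine Set.iUnion_subset fun t => ?_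
  induction t with
  | zero => exact Set.empty_subset _
  | succ t ih =>
    intro v hv
    by_contra hvA
    exact (h v hvA).not_ge (hv.trans (Nat.add_le_add_left (inDeg_mono ih) _))

lemma Stable.fired_eq_empty (hc : Stable N c) : fired N c = ∅ :=
  Set.subset_empty_iff.1 <| fired_subset fun v _ => by simpa using hc v

lemma firedBefore_subset_of_le (h : ∀ v ∈ fired N c, c v ≤ c' v) :
    firedBefore N c t ⊆ firedBefore N c' t := by
  induction t with
  | zero => exact subset_rfl
  | succ t ih =>
    exact fun v hv => hv.trans
      (Nat.add_le_add (h v (firedBefore_subset_fired hv)) (inDeg_mono ih))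

/-- A sufficient condition for no vertex to fire twice: even if every vertex of `fired N c` sent its
grains to `v` before `v` fires, one firing would make `v` stable. -/
def FiresOnce (N : Finset Vertex) (c : Config) : Prop :=
  ∀ v, c v + inDeg N (fired N c) v < 2 * #N

open Classical in
lemma FiresOnce.act_eq {b : Config} (h : FiresOnce N c)
    (hb : ∀ v, b v + (if v ∈ firedBefore N c t then #N else 0) =
      c v + inDeg N (firedBefore N c t) v) :
    Act N b = firedBefore N c (t + 1) \ firedBefore N c t := by
  ext v
  have hv := hb v
  have hlt := h v
  have hle : inDeg N (firedBefore N c t) v ≤ inDeg N (fired N c) v :=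
    inDeg_mono firedBefore_subset_fired
  simp only [Act, Set.mem_ofPred_eq, Set.mem_sdiff, mem_firedBefore_succ]
  split_ifs at hv with hfired
  · simp only [hfired, not_true_eq_false, and_false, iff_false]
    omega
  · rw [← hv, add_zero, and_iff_left hfired]

open Classical in
theorem FiresOnce.iterate_sandF_add (h : FiresOnce N c) (t : ℕ) (v : Vertex) :
    (sandF N)^[t] c v + (if v ∈ firedBefore N c t then #N else 0) =
      c v + inDeg N (firedBefore N c t) v := by
  induction t generalizing v with
  | zero => simp [firedBefore]
  | succ t ih =>
    have hact := h.act_eq ih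
    have hunstable : #N ≤ (sandF N)^[t] c v ↔
        v ∈ firedBefore N c (t + 1) \ firedBefore N c t := Set.ext_iff.1 hact v
    have hsub : firedBefore N c t ⊆ firedBefore N c (t + 1) := firedBefore_mono t.le_succ
    have hsum := inDeg_inter_add_inDeg_sdiff (N := N) (v := v)
      (firedBefore N c (t + 1)) (firedBefore N c t)
    rw [Set.inter_eq_right.2 hsub] at hsum
    rw [Function.iterate_succ_apply', sandF_apply, hact, ← hsum, ← add_assoc, ← ih v]
    by_cases hv : v ∈ firedBefore N c t
    · simp only [hunstable, hv, hsub hv, Set.mem_sdiff, not_true_eq_false, and_false, if_true,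
        if_false]
      omega
    · by_cases hv' : v ∈ firedBefore N c (t + 1)
      · have hle : #N ≤ (sandF N)^[t] c v := hunstable.2 ⟨hv', hv⟩
        simp only [hle, hv, hv', if_true, if_false]
        omega
      · simp only [hunstable, hv, hv', Set.mem_sdiff, false_and, if_false]
        omega

lemma FiresOnce.act_iterate_sandF (h : FiresOnce N c) (t : ℕ) :
    Act N ((sandF N)^[t] c) = firedBefore N c (t + 1) \ firedBefore N c t :=
  h.act_eq (h.iterate_sandF_add t)

lemma FiresOnce.setOf_unstable_eq_fired (h : FiresOnce N c) :
    {v | ∃ t, #N ≤ (sandF N)^[t] c v} = fired N c := by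
  have hact (t v) : #N ≤ (sandF N)^[t] c v ↔ v ∈ firedBefore N c (t + 1) \ firedBefore N c t :=
    Set.ext_iff.1 (h.act_iterate_sandF t) v
  ext v
  simp only [Set.mem_ofPred_eq, hact]
  exact ⟨fun ⟨t, ht⟩ => firedBefore_subset_fired ht.1, exists_mem_firedBefore_sdiff⟩

end Fired

section FillClosed

variable {N : Finset Vertex} {c : Config} {A : Set Vertex} {v d : Vertex}

/-- A set is fill-closed when it contains every vertex all of whose in-neighbors it contains. A
vertex without grains fires only after all of its in-neighbors, so firing does not lead from a
fill-closed set to an empty vertex outside of it. -/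
def FillClosed (N : Finset Vertex) (A : Set Vertex) : Prop :=
  ∀ v, (∀ d ∈ N, v - d ∈ A) → v ∈ A

lemma FillClosed.inDeg_lt (hA : FillClosed N A) (hv : v ∉ A) : inDeg N A v < #N :=
  not_le.1 fun h => hv (hA v (card_le_inDeg_iff.1 h))

lemma fillClosed_fired : FillClosed N (fired N c) := fun _ h =>
  mem_fired_iff.2 ((card_le_inDeg_iff.2 h).trans (Nat.le_add_left _ _))

lemma fillClosed_setOf_nonneg {f : Vertex →+ ℤ} (hd : d ∈ N) (hfd : 0 < f d) :
    FillClosed N {v | 0 ≤ f v} := fun v h => by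
  have hvd : 0 ≤ f (v - d) := h d hd
  rw [map_sub] at hvd
  exact Set.mem_ofPred.2 (by omega)

lemma fillClosed_setOf_lt {f : Vertex →+ ℤ} (hd : d ∈ N) (hfd : f d ≤ 0) (n : ℤ) :
    FillClosed N {v | f v < n} := fun v h => by
  have hvd : f (v - d) < n := h d hd
  rw [map_sub] at hvd
  exact Set.mem_ofPred.2 (by omega)

end FillClosed

section Source

variable {N : Finset Vertex} {c : Config} {A : Set Vertex} {w v d : Vertex} {t : ℕ}

lemma fired_add_single_subset (hw : w ∈ A) (h : ∀ v ∉ A, c v + inDeg N A v < #N) :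
    fired N (c + Pi.single w 1) ⊆ A :=
  fired_subset fun v hv => by
    have hvw : v ≠ w := fun h => hv (h ▸ hw)
    simpa [Pi.single_eq_of_ne hvw] using h v hv

lemma FillClosed.fired_add_single_subset (hA : FillClosed N A) (hw : w ∈ A)
    (hc : ∀ v ∉ A, c v = 0) : fired N (c + Pi.single w 1) ⊆ A :=
  _root_.fired_add_single_subset hw fun v hv => by simpa [hc v hv] using hA.inDeg_lt hv

lemma Stable.exists_sub_mem_firedBefore (hc : Stable N c) (hv : v ≠ w)
    (h : v ∈ firedBefore N (c + Pi.single w 1) (t + 1)) :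
    ∃ d ∈ N, v - d ∈ firedBefore N (c + Pi.single w 1) t := by
  have hcv := hc v
  rw [mem_firedBefore_succ, Pi.add_apply, Pi.single_eq_of_ne hv] at h
  exact inDeg_pos_iff.1 (by omega)

lemma Stable.act_iterate_subset (hc : Stable N c) (hw : w ∈ A)
    (hA : ∀ d ∈ N, ∀ v, v - d ∈ A → v ∈ A) (t : ℕ) :
    Act N ((sandF N)^[t] (c + Pi.single w 1)) ⊆ A := by
  induction t with
  | zero =>
    intro v hv
    by_contra hvA
    have hvw : v ≠ w := fun h => hvA (h ▸ hw)
    exact (hc v).not_ge (by simpa [Act, Pi.single_eq_of_ne hvw] using hv)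
  | succ t ih =>
    intro v hv
    by_contra hvA
    have hzero : inDeg N (Act N ((sandF N)^[t] (c + Pi.single w 1))) v = 0 := by
      by_contra hpos
      obtain ⟨d, hd, hvd⟩ := inDeg_pos_iff.1 (Nat.pos_of_ne_zero hpos)
      exact hvA (hA d hd v (ih hvd))
    have hstable : (sandF N)^[t] (c + Pi.single w 1) v < #N := not_le.1 fun h => hvA (ih h)
    rw [Act, Set.mem_ofPred_eq, Function.iterate_succ_apply', sandF_apply, hzero, add_zero] at hv
    exact hstable.not_ge (hv.trans (Nat.sub_le _ _))

lemma Stable.firesOnce_add_single (hc : Stable N c) (hd : d ∈ N)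
    (hwd : w - d ∉ fired N (c + Pi.single w 1)) : FiresOnce N (c + Pi.single w 1) := by
  intro v
  have hcv := hc v
  by_cases hv : v = w
  · have hlt : inDeg N (fired N (c + Pi.single w 1)) w < #N :=
      not_le.1 fun h => hwd (card_le_inDeg_iff.1 h d hd)
    subst hv
    rw [Pi.add_apply, Pi.single_eq_same]
    omega
  · have hle : inDeg N (fired N (c + Pi.single w 1)) v ≤ #N := inDeg_le_card
    rw [Pi.add_apply, Pi.single_eq_of_ne hv]
    omega

end Source

section PlaneCross

variable {N : Finset Vertex} {f : Vertex →+ ℤ} {v : Vertex}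

/-- The two-dimensional cross product `a × v`, as a linear functional of `v`. -/
def planeCross (a : Vertex) : Vertex →+ ℤ := a.1 • .snd ℤ ℤ - a.2 • .fst ℤ ℤ

lemma planeCross_apply (a v : Vertex) : planeCross a v = a.1 * v.2 - a.2 * v.1 := rfl

lemma planeCross_self (a : Vertex) : planeCross a a = 0 := by rw [planeCross_apply]; ring

lemma neg_planeCross (a b : Vertex) : -planeCross a b = planeCross b a := by
  simp only [planeCross_apply]; ring

lemma planeCross_mul_map (f : Vertex →+ ℤ) (a b v : Vertex) :
    planeCross a b * f v = planeCross v b * f a + planeCross a v * f b := by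
  have hcomb : planeCross a b • v = planeCross v b • a + planeCross a v • b := by
    ext <;> simp only [planeCross_apply, Prod.fst_add, Prod.snd_add, Prod.smul_fst, Prod.smul_snd,
      smul_eq_mul] <;> ring
  simpa only [map_add, map_zsmul, smul_eq_mul] using congrArg f hcomb

/-- The neighborhood is not contained in a line through the origin. -/
def SpansPlane (N : Finset Vertex) : Prop := ∃ a ∈ N, ∃ b ∈ N, planeCross a b ≠ 0

lemma SpansPlane.two_le_card (hN : SpansPlane N) : 2 ≤ #N := by
  obtain ⟨a, ha, b, hb, hab⟩ := hN
  exact one_lt_card.2 ⟨a, ha, b, hb, fun h => hab (h ▸ planeCross_self a)⟩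

lemma SpansPlane.exists_planeCross_pos (hN : SpansPlane N) :
    ∃ a ∈ N, ∃ b ∈ N, 0 < planeCross a b := by
  obtain ⟨a, ha, b, hb, hab⟩ := hN
  rcases hab.lt_or_gt with hneg | hpos
  · exact ⟨b, hb, a, ha, by rw [← neg_planeCross]; exact neg_pos.2 hneg⟩
  · exact ⟨a, ha, b, hb, hpos⟩

lemma SpansPlane.exists_planeCross_ne_zero (hN : SpansPlane N) (hv : v ≠ 0) :
    ∃ d ∈ N, planeCross d v ≠ 0 := by
  obtain ⟨a, ha, b, hb, hab⟩ := hN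
  by_contra! h
  have vanishes (f : Vertex →+ ℤ) : f v = 0 := by
    have hcomb := planeCross_mul_map f a b v
    rw [h a ha, ← neg_planeCross b v, h b hb] at hcomb
    simpa [hab] using hcomb
  exact hv (Prod.ext (vanishes (.fst ℤ ℤ)) (vanishes (.snd ℤ ℤ)))

lemma SpansPlane.exists_map_pos_of_ne_zero (hN : SpansPlane N) (hv : v ≠ 0) :
    ∃ ℓ : Vertex →+ ℤ, ∃ a ∈ N, 0 < ℓ v ∧ ℓ a ≤ 0 ∧ ∀ d ∈ N, ℓ a ≤ ℓ d := by
  obtain ⟨b, hb, hbv⟩ := hN.exists_planeCross_ne_zero hv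
  obtain ⟨ℓ, hℓv, hℓb⟩ : ∃ ℓ : Vertex →+ ℤ, 0 < ℓ v ∧ ℓ b = 0 := by
    rcases hbv.lt_or_gt with hneg | hpos
    · refine ⟨-planeCross b, neg_pos.2 hneg, ?_⟩
      rw [AddMonoidHom.neg_apply, planeCross_self, neg_zero]
    · exact ⟨planeCross b, hpos, planeCross_self b⟩
  obtain ⟨a, ha, hmin⟩ := N.exists_min_image ℓ ⟨b, hb⟩
  exact ⟨ℓ, a, ha, hℓv, hℓb ▸ hmin b hb, hmin⟩

lemma SpansPlane.exists_extreme_pair (hN : SpansPlane N) (hf : ∀ d ∈ N, 0 < f d) :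
    ∃ a ∈ N, ∃ b ∈ N, 0 < planeCross a b ∧ ∀ d ∈ N, 0 ≤ planeCross a d ∧ 0 ≤ planeCross d b := by
  -- On the line `f = 1`, this is the signed distance of the projections of `q.1` and `q.2`.
  let gap (q : Vertex × Vertex) : ℚ := planeCross q.1 q.2 / (f q.1 * f q.2)
  obtain ⟨a₀, ha₀, b₀, hb₀, hab₀⟩ := hN.exists_planeCross_pos
  obtain ⟨⟨a, b⟩, hmem, hmax⟩ := (N ×ˢ N).exists_max_image gap ⟨(a₀, b₀), mk_mem_product ha₀ hb₀⟩
  obtain ⟨ha, hb⟩ : a ∈ N ∧ b ∈ N := mem_product.1 hmem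
  have hfa := hf a ha
  have hfb := hf b hb
  have cross_le (p) (hp : p ∈ N) (q) (hq : q ∈ N) :
      planeCross p q * (f a * f b) ≤ planeCross a b * (f p * f q) := by
    have hle : gap (p, q) ≤ gap (a, b) := hmax _ (mk_mem_product hp hq)
    have hfpq := mul_pos (hf p hp) (hf q hq)
    rw [div_le_div_iff₀ (by exact_mod_cast hfpq) (by exact_mod_cast mul_pos hfa hfb)] at hle
    exact_mod_cast hle
  have hab : 0 < planeCross a b * (f a₀ * f b₀) :=
    (mul_pos hab₀ (mul_pos hfa hfb)).trans_le (cross_le a₀ ha₀ b₀ hb₀)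
  refine ⟨a, ha, b, hb,
    (mul_pos_iff_of_pos_right (mul_pos (hf a₀ ha₀) (hf b₀ hb₀))).1 hab, fun d hd => ?_⟩
  have hcomb := planeCross_mul_map f a b d
  have had : 0 ≤ planeCross a d * (f b * f b) := by
    linear_combination cross_le d hd b hb + f b * hcomb
  have hdb : 0 ≤ planeCross d b * (f a * f a) := by
    linear_combination cross_le a ha d hd + f a * hcomb
  exact ⟨(mul_nonneg_iff_of_pos_right (mul_pos hfb hfb)).1 had,
    (mul_nonneg_iff_of_pos_right (mul_pos hfa hfa)).1 hdb⟩

end PlaneCross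

section Prune

variable {N : Finset Vertex} {c c' : Config} {e v w : Vertex} {t T i : ℕ}

/-- `IsAncestor N c e i v`: there is a chain of `i` firings from `v` to `e`, each vertex firing
strictly before the next one when the dynamics starts from `c`. -/
inductive IsAncestor (N : Finset Vertex) (c : Config) (e : Vertex) : ℕ → Vertex → Prop
  | refl : IsAncestor N c e 0 e
  | step {i t : ℕ} {v d : Vertex} : IsAncestor N c e i v → d ∈ N → v ∉ firedBefore N c t →
      v - d ∈ firedBefore N c t → IsAncestor N c e (i + 1) (v - d)

/-- The vertices that are relevant for the firing of `e`: the smallest fill-closed set containing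
the ancestors of `e`. -/
inductive Relevant (N : Finset Vertex) (c : Config) (e : Vertex) : Vertex → Prop
  | ancestor {i : ℕ} {v : Vertex} : IsAncestor N c e i v → Relevant N c e v
  | fill {v : Vertex} : (∀ d ∈ N, Relevant N c e (v - d)) → Relevant N c e v

lemma IsAncestor.mem_firedBefore (h : IsAncestor N c e i v) (he : e ∈ firedBefore N c (T + 1)) :
    v ∈ firedBefore N c (T + 1 - i) := by
  induction h with
  | refl => exact he
  | @step i t v d _ _ hv hvd ih =>
    have hlt : t < T + 1 - i := lt_of_not_ge fun hle => hv (firedBefore_mono hle ih)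
    exact firedBefore_mono (by omega) hvd

lemma IsAncestor.map_le {ℓ : Vertex →+ ℤ} {m : ℤ} (hℓ : ∀ d ∈ N, m ≤ ℓ d)
    (h : IsAncestor N c e i v) : ℓ v ≤ ℓ e - i * m := by
  induction h with
  | refl => simp
  | @step i t v d _ hd _ _ ih =>
    rw [map_sub]
    push_cast
    linarith [hℓ d hd]

lemma IsAncestor.mem_firedBefore_of_le (hle : ∀ i v, IsAncestor N c e i v → c v ≤ c' v)
    (h : IsAncestor N c e i v) (hv : v ∈ firedBefore N c t) : v ∈ firedBefore N c' t := by
  induction t generalizing i v with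
  | zero => exact hv
  | succ t ih =>
    by_cases hvt : v ∈ firedBefore N c t
    · exact firedBefore_mono t.le_succ (ih h hvt)
    · exact hv.trans <| Nat.add_le_add (hle i v h) <|
        inDeg_le_inDeg fun d hd hvd => ih (h.step hd hvt hvd) hvd

lemma Stable.exists_isAncestor_source (hc : Stable N c)
    (h : IsAncestor N (c + Pi.single w 1) e i v) (hv : v ∈ fired N (c + Pi.single w 1)) :
    ∃ j, IsAncestor N (c + Pi.single w 1) e j w := by
  obtain ⟨t, hvt⟩ := Set.mem_iUnion.1 hv
  clear hv
  induction t generalizing i v with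
  | zero => exact absurd hvt notMem_firedBefore_zero
  | succ t ih =>
    by_cases hvw : v = w
    · exact ⟨i, hvw ▸ h⟩
    · by_cases hvt' : v ∈ firedBefore N (c + Pi.single w 1) t
      · exact ih h hvt'
      · obtain ⟨d, hd, hvd⟩ := hc.exists_sub_mem_firedBefore hvw hvt
        exact ih (h.step hd hvt' hvd) hvd

lemma Stable.relevant_source (hc : Stable N c) (he : e ∈ fired N (c + Pi.single w 1)) :
    Relevant N (c + Pi.single w 1) e w :=
  (hc.exists_isAncestor_source .refl he).elim fun _ => .ancestor

lemma Relevant.mem_fired (h : Relevant N c e v) (he : e ∈ fired N c) : v ∈ fired N c := by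
  obtain ⟨T, heT, -⟩ := exists_mem_firedBefore_sdiff he
  induction h with
  | ancestor hv => exact firedBefore_subset_fired (hv.mem_firedBefore heT)
  | fill _ ih => exact fillClosed_fired _ ih

lemma Relevant.map_le_of_nonneg {ℓ : Vertex →+ ℤ} {a : Vertex} (h : Relevant N c e v) (ha : a ∈ N)
    (ha0 : ℓ a = 0) (hℓ : ∀ d ∈ N, 0 ≤ ℓ d) : ℓ v ≤ ℓ e := by
  induction h with
  | ancestor hv => simpa using hv.map_le hℓ
  | fill _ ih => simpa [ha0] using ih a ha

lemma Relevant.map_le_of_pos {f : Vertex →+ ℤ} (h : Relevant N c e v) (hN : SpansPlane N)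
    (hf : ∀ d ∈ N, 0 < f d) : f v ≤ f e := by
  obtain ⟨a, ha, b, hb, hab, hextreme⟩ := hN.exists_extreme_pair hf
  have hav : planeCross a v ≤ planeCross a e :=
    h.map_le_of_nonneg ha (planeCross_self a) fun d hd => (hextreme d hd).1
  have hbv : -planeCross b v ≤ -planeCross b e :=
    h.map_le_of_nonneg (ℓ := -planeCross b) hb
      (by rw [AddMonoidHom.neg_apply, planeCross_self, neg_zero])
      fun d hd => by rw [AddMonoidHom.neg_apply, neg_planeCross]; exact (hextreme d hd).2
  rw [neg_planeCross, neg_planeCross] at hbv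
  refine le_of_mul_le_mul_left ?_ hab
  rw [planeCross_mul_map f a b v, planeCross_mul_map f a b e]
  exact add_le_add (mul_le_mul_of_nonneg_right hbv (hf a ha).le)
    (mul_le_mul_of_nonneg_right hav (hf b hb).le)

/-- With one missing grain, an enclosed vertex fires right after the first of its in-neighbors; so
one that has not fired by time `T - j` is at the end of a long ray of vertices that fire late. -/
lemma Relevant.map_le_of_notMem_firedBefore (h : Relevant N c e v)
    (he : e ∈ firedBefore N c (T + 1)) (hle : ∀ i v, IsAncestor N c e i v → c v ≤ c' v)
    (hsat : ∀ v, (∀ d ∈ N, Relevant N c e (v - d)) → #N ≤ c' v + 1) {ℓ : Vertex →+ ℤ} {a : Vertex}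
    (ha : a ∈ N) (ha0 : ℓ a ≤ 0) (hmin : ∀ d ∈ N, ℓ a ≤ ℓ d) {j : ℕ}
    (hv : v ∉ firedBefore N c' (T - j)) : ℓ v ≤ ℓ e - j * ℓ a := by
  induction h generalizing j with
  | @ancestor i v hi =>
    have hij : i ≤ j := by
      by_contra! hji
      exact hv <| hi.mem_firedBefore_of_le hle <|
        firedBefore_mono (by omega) (hi.mem_firedBefore he)
    have hmul : (j : ℤ) * ℓ a ≤ i * ℓ a :=
      mul_le_mul_of_nonpos_right (by exact_mod_cast hij) ha0
    linarith [hi.map_le hmin]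
  | @fill v hfill ih =>
    have hva : v - a ∉ firedBefore N c' (T - (j + 1)) := by
      intro hva
      have hlt : j < T := by
        by_contra! hTj
        rw [Nat.sub_eq_zero_of_le (by omega)] at hva
        exact notMem_firedBefore_zero hva
      have hpos : 0 < inDeg N (firedBefore N c' (T - (j + 1))) v := inDeg_pos_iff.2 ⟨a, ha, hva⟩
      have hsat_v := hsat v hfill
      apply hv
      rw [show T - j = T - (j + 1) + 1 by omega, mem_firedBefore_succ]
      omega
    have hle_a := ih a ha hva
    rw [map_sub] at hle_a
    push_cast at hle_a
    linarith

theorem firedBefore_sdiff_eq_singleton (hN : SpansPlane N)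
    (he : e ∈ firedBefore N c (T + 1) \ firedBefore N c T)
    (heq : ∀ v, Relevant N c e v → c' v = c v) (hrel : ∀ v ∈ fired N c', Relevant N c e v)
    (hsat : ∀ v, (∀ d ∈ N, Relevant N c e (v - d)) → #N ≤ c v + 1) :
    firedBefore N c' (T + 1) \ firedBefore N c' T = {e} := by
  have hle (i v) (h : IsAncestor N c e i v) : c v ≤ c' v := (heq v (.ancestor h)).ge
  have hsat' (v) (h : ∀ d ∈ N, Relevant N c e (v - d)) : #N ≤ c' v + 1 :=
    heq v (.fill h) ▸ hsat v h
  refine Set.eq_singleton_iff_unique_mem.2 ⟨⟨?_, fun h => he.2 ?_⟩, fun v hv => ?_⟩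
  · exact IsAncestor.refl.mem_firedBefore_of_le hle he.1
  · exact firedBefore_subset_of_le (fun v hv => (heq v (hrel v hv)).le) h
  · by_contra hve
    obtain ⟨ℓ, a, ha, hℓ, ha0, hmin⟩ := hN.exists_map_pos_of_ne_zero (sub_ne_zero.2 hve)
    have hmap := (hrel v (firedBefore_subset_fired hv.1)).map_le_of_notMem_firedBefore he.1 hle
      hsat' ha ha0 hmin (j := 0) hv.2
    simp only [map_sub, CharP.cast_eq_zero, zero_mul, sub_zero] at hℓ hmap
    omega

end Prune

section Quota

variable {N : Finset Vertex} {R B : Set Vertex} {v : Vertex}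

/-- The configuration with support in `R` having as many grains as possible such that the vertices
of `R` stay stable when every vertex of `B` fires once. The truncated subtraction only matters at
vertices receiving `#N` grains from `B`. -/
noncomputable def quota (N : Finset Vertex) (R B : Set Vertex) : Config :=
  R.indicator fun v => #N - 1 - inDeg N B v

lemma quota_of_mem (hv : v ∈ R) : quota N R B v = #N - 1 - inDeg N B v := Set.indicator_of_mem hv _

lemma quota_of_notMem (hv : v ∉ R) : quota N R B v = 0 := Set.indicator_of_notMem hv _

lemma quota_add_inDeg_lt (h : inDeg N B v < #N) : quota N R B v + inDeg N B v < #N := by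
  by_cases hv : v ∈ R
  · rw [quota_of_mem hv]
    omega
  · rwa [quota_of_notMem hv, zero_add]

lemma stable_quota (hN : 0 < #N) : Stable N (quota N R B) := fun v => by
  by_cases hv : v ∈ R
  · rw [quota_of_mem hv]
    omega
  · rwa [quota_of_notMem hv]

end Quota

section FiredOnly

variable {N : Finset Vertex} {c : Config} {w e u s v : Vertex}

/-- The vertices fired by a grain added at `w`, but not by one added at `u`. -/
def firedOnly (N : Finset Vertex) (c : Config) (w u : Vertex) : Set Vertex :=
  fired N (c + Pi.single w 1) \ fired N (c + Pi.single u 1)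

lemma notMem_firedOnly_of_mem (hv : v ∈ firedOnly N c w u) : v ∉ firedOnly N c u w :=
  fun hv' => hv.2 hv'.1

lemma add_inDeg_inter_le_quota (hv : v ∈ firedOnly N c w u) :
    c v + inDeg N (fired N (c + Pi.single u 1) ∩ fired N (c + Pi.single w 1)) v ≤
      quota N (firedOnly N c w u) (firedOnly N c u w) v := by
  have hlt := not_le.1 fun h => hv.2 (mem_fired_iff.2 h)
  rw [Pi.add_apply, ← inDeg_inter_add_inDeg_sdiff _ (fired N (c + Pi.single w 1))] at hlt
  rw [quota_of_mem hv, firedOnly]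
  omega

theorem firedOnly_subset_fired_quota :
    firedOnly N c w u ⊆
      fired N (quota N (firedOnly N c w u) (firedOnly N c u w) + Pi.single w 1) := by
  set V := fired N (c + Pi.single w 1)
  set V' := fired N (c + Pi.single u 1)
  set q := quota N (firedOnly N c w u) (firedOnly N c u w)
  have hsub (t) : firedBefore N (c + Pi.single w 1) t ⊆
      V' ∩ V ∪ firedBefore N (q + Pi.single w 1) t := by
    induction t with
    | zero => exact Set.empty_subset _
    | succ t ih =>
      intro v hv
      have hvV : v ∈ V := firedBefore_subset_fired hv
      by_cases hvV' : v ∈ V'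
      · exact .inl ⟨hvV', hvV⟩
      · right
        have hdeg := (inDeg_mono (N := N) (v := v) ih).trans inDeg_union_le
        have hquota : c v + inDeg N (V' ∩ V) v ≤ q v := add_inDeg_inter_le_quota ⟨hvV, hvV'⟩
        rw [mem_firedBefore_succ, Pi.add_apply] at hv ⊢
        omega
  intro v hv
  obtain ⟨t, ht⟩ := Set.mem_iUnion.1 hv.1
  exact (hsub t ht).elim (fun h => absurd h.1 hv.2) fun h => firedBefore_subset_fired h

lemma card_le_quota_add_one (hv : v ∈ firedOnly N c w u)
    (h : ∀ d ∈ N, v - d ∈ firedOnly N c w u) :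
    #N ≤ quota N (firedOnly N c w u) (firedOnly N c u w) v + 1 := by
  have hzero : inDeg N (firedOnly N c u w) v = 0 := by
    by_contra hpos
    obtain ⟨d, hd, hvd⟩ := inDeg_pos_iff.1 (Nat.pos_of_ne_zero hpos)
    exact notMem_firedOnly_of_mem hvd (h d hd)
  rw [quota_of_mem hv, hzero]
  omega

lemma source_mem_firedOnly (hN : 2 ≤ #N) (he : e ∈ firedOnly N c w u) : w ∈ firedOnly N c w u := by
  by_contra hw
  have hstable :
      Stable N (quota N (firedOnly N c w u) (firedOnly N c u w) + Pi.single w 1) := by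
    intro v
    by_cases hv : v = w
    · rw [hv, Pi.add_apply, quota_of_notMem hw, Pi.single_eq_same]
      exact hN
    · rw [Pi.add_apply, Pi.single_eq_of_ne hv]
      exact stable_quota (by omega) v
  exact Set.notMem_empty e (hstable.fired_eq_empty ▸ firedOnly_subset_fired_quota he)

lemma fired_quota_firedOnly (hN : 2 ≤ #N) (hA : FillClosed N (firedOnly N c w u))
    (he : e ∈ firedOnly N c w u) :
    fired N (quota N (firedOnly N c w u) (firedOnly N c u w) + Pi.single w 1) =
      firedOnly N c w u :=
  (hA.fired_add_single_subset (source_mem_firedOnly hN he) fun _ => quota_of_notMem).antisymm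
    firedOnly_subset_fired_quota

/-- The vertices relevant for the firing of `e` when a grain is added at `w` to the quota
configuration on `firedOnly N c w u`; only these keep their grains in `separatedConf`. -/
def relevantOnly (N : Finset Vertex) (c : Config) (w e u : Vertex) : Set Vertex :=
  {v | Relevant N (quota N (firedOnly N c w u) (firedOnly N c u w) + Pi.single w 1) e v}

lemma fillClosed_relevantOnly : FillClosed N (relevantOnly N c w e u) := fun _ => .fill

/-- The configuration in which a grain added at `w` and one added at `u` fire disjoint sets of
vertices, still reaching `e` and `s` respectively. -/
noncomputable def separatedConf (N : Finset Vertex) (c : Config) (w e u s : Vertex) : Config :=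
  quota N (relevantOnly N c w e u) (firedOnly N c u w) +
    quota N (relevantOnly N c u s w) (firedOnly N c w u)

lemma separatedConf_comm : separatedConf N c u s w e = separatedConf N c w e u s :=
  add_comm _ _

lemma separatedConf_of_notMem (hv : v ∉ relevantOnly N c w e u) :
    separatedConf N c w e u s v = quota N (relevantOnly N c u s w) (firedOnly N c w u) v := by
  rw [separatedConf, Pi.add_apply, quota_of_notMem hv, zero_add]

end FiredOnly

section CrossingCoordinates

variable {N : Finset Vertex} {c : Config} {n : ℤ} {f g : Vertex →+ ℤ} {w e u s v d : Vertex}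

/-- The vertices whose coordinates `f` and `g` lie in `[0, n)`. Abstract coordinates make the two
directions of a crossing interchangeable. -/
def square (f g : Vertex →+ ℤ) (n : ℤ) : Set Vertex :=
  {v | (0 ≤ f v ∧ f v < n) ∧ 0 ≤ g v ∧ g v < n}

lemma square_comm : square g f n = square f g n := Set.ext fun _ => and_comm

/-- A grain added at `w`, on the side `f = 0` of the square, makes `e`, on the side `f = n - 1`,
fire alone at some time, and no vertex with `g = n - 1` ever fires. -/
structure Transports (N : Finset Vertex) (c : Config) (n : ℤ) (f g : Vertex →+ ℤ)
    (w e : Vertex) : Prop where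
  source_mem : w ∈ square f g n
  target_mem : e ∈ square f g n
  map_source : f w = 0
  map_target : f e = n - 1
  exists_act_eq : ∃ t, Act N ((sandF N)^[t] (c + Pi.single w 1)) = {e}
  isolated : ∀ t, ∀ v ∈ Act N ((sandF N)^[t] (c + Pi.single w 1)), g v ≠ n - 1

/-- A crossing configuration in the coordinates `f` and `g`, transporting `w` to `e` along `f` and
`u` to `s` along `g`. -/
structure Crossing (N : Finset Vertex) (c : Config) (n : ℤ) (f g : Vertex →+ ℤ)
    (w e u s : Vertex) : Prop where
  stable : Stable N c
  support_subset : Function.support c ⊆ square f g n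
  transports : Transports N c n f g w e
  transports' : Transports N c n g f u s

namespace Crossing

lemma symm (h : Crossing N c n f g w e u s) : Crossing N c n g f u s w e :=
  ⟨h.stable, square_comm ▸ h.support_subset, h.transports', h.transports⟩

lemma eq_zero_of_notMem (h : Crossing N c n f g w e u s) (hv : v ∉ square f g n) : c v = 0 :=
  Function.notMem_support.1 fun hc => hv (h.support_subset hc)

lemma two_le (h : Crossing N c n f g w e u s) : 2 ≤ n := by
  obtain ⟨t, ht⟩ := h.transports.exists_act_eq
  have hne : g e ≠ n - 1 := h.transports.isolated t e (ht ▸ rfl)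
  obtain ⟨-, hge⟩ := h.transports.target_mem
  omega

lemma target_mem_of_closed (h : Crossing N c n f g w e u s) {A : Set Vertex} (hw : w ∈ A)
    (hA : ∀ d ∈ N, ∀ v, v - d ∈ A → v ∈ A) : e ∈ A := by
  obtain ⟨t, ht⟩ := h.transports.exists_act_eq
  exact h.stable.act_iterate_subset hw hA t (ht ▸ rfl)

lemma exists_map_pos (h : Crossing N c n f g w e u s) : ∃ d ∈ N, 0 < f d := by
  by_contra! hneg
  have hfe : f e ≤ 0 := h.target_mem_of_closed (A := {v | f v ≤ 0}) h.transports.map_source.le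
    fun d hd v (hv : f (v - d) ≤ 0) => by
      rw [map_sub] at hv
      exact Set.mem_ofPred.2 (by linarith [hneg d hd])
  have hn := h.two_le
  have hmap := h.transports.map_target
  omega

lemma map_nonneg_of_mem_fired (h : Crossing N c n f g w e u s)
    (hv : v ∈ fired N (c + Pi.single w 1)) : 0 ≤ f v ∧ 0 ≤ g v := by
  obtain ⟨d, hd, hfd⟩ := h.exists_map_pos
  obtain ⟨d', hd', hgd'⟩ := h.symm.exists_map_pos
  constructor
  · exact (fillClosed_setOf_nonneg hd hfd).fired_add_single_subset h.transports.source_mem.1.1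
      (fun v hv => h.eq_zero_of_notMem fun hvs => hv hvs.1.1) hv
  · exact (fillClosed_setOf_nonneg hd' hgd').fired_add_single_subset h.transports.source_mem.2.1
      (fun v hv => h.eq_zero_of_notMem fun hvs => hv hvs.2.1) hv

lemma source_sub_notMem_fired (h : Crossing N c n f g w e u s) (hfd : 0 < f d) :
    w - d ∉ fired N (c + Pi.single w 1) := fun hwd => by
  have hnonneg := (h.map_nonneg_of_mem_fired hwd).1
  rw [map_sub, h.transports.map_source] at hnonneg
  omega

lemma firesOnce (h : Crossing N c n f g w e u s) : FiresOnce N (c + Pi.single w 1) :=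
  h.exists_map_pos.elim fun _ hd =>
    h.stable.firesOnce_add_single hd.1 (h.source_sub_notMem_fired hd.2)

lemma target_mem_fired (h : Crossing N c n f g w e u s) : e ∈ fired N (c + Pi.single w 1) := by
  obtain ⟨t, ht⟩ := h.transports.exists_act_eq
  rw [h.firesOnce.act_iterate_sandF] at ht
  exact firedBefore_subset_fired (ht.symm.subset rfl).1

lemma map_ne_of_mem_fired (h : Crossing N c n f g w e u s)
    (hv : v ∈ fired N (c + Pi.single w 1)) : g v ≠ n - 1 := by
  rw [← h.firesOnce.setOf_unstable_eq_fired] at hv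
  exact hv.elim fun t ht => h.transports.isolated t v ht

lemma source_mem_fired (h : Crossing N c n f g w e u s) : w ∈ fired N (c + Pi.single w 1) :=
  (h.stable.relevant_source h.target_mem_fired).mem_fired h.target_mem_fired

lemma abs_map_sub_lt (h : Crossing N c n f g w e u s) : |g e - g w| < n - 1 := by
  have hge := h.map_ne_of_mem_fired h.target_mem_fired
  have hgw := h.map_ne_of_mem_fired h.source_mem_fired
  obtain ⟨-, he⟩ := h.transports.target_mem
  obtain ⟨-, hw⟩ := h.transports.source_mem
  rw [abs_lt]
  omega

lemma target_mem_firedOnly (h : Crossing N c n f g w e u s) : e ∈ firedOnly N c w u :=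
  ⟨h.target_mem_fired, fun he => h.symm.map_ne_of_mem_fired he h.transports.map_target⟩

lemma fillClosed_firedOnly (h : Crossing N c n f g w e u s) :
    FillClosed N (firedOnly N c w u) := by
  refine fun v hv => ⟨fillClosed_fired v fun d hd => (hv d hd).1, fun hvu => ?_⟩
  by_cases hu : v = u
  · obtain ⟨d, hd, hgd⟩ := h.symm.exists_map_pos
    have hnonneg := (h.map_nonneg_of_mem_fired (hv d hd).1).2
    rw [hu, map_sub, h.transports'.map_source] at hnonneg
    omega
  · obtain ⟨t, ht, -⟩ := exists_mem_firedBefore_sdiff hvu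
    obtain ⟨d, hd, hvd⟩ := h.stable.exists_sub_mem_firedBefore hu ht
    exact (hv d hd).2 (firedBefore_subset_fired hvd)

/-- If all firings propagated along one direction, the segments from `w` to `e` and from `u` to `s`
would be parallel to it. -/
theorem spansPlane (h : Crossing N c n (.fst ℤ ℤ) (.snd ℤ ℤ) w e u s) : SpansPlane N := by
  obtain ⟨a, ha, ha1⟩ := h.exists_map_pos
  by_contra hflat
  have hcross (d) (hd : d ∈ N) : planeCross a d = 0 := by
    by_contra hne
    exact hflat ⟨a, ha, d, hd, hne⟩
  have closed (z : Vertex) (d) (hd : d ∈ N) (v) (hv : planeCross a (v - d) = planeCross a z) :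
      planeCross a v = planeCross a z := by
    rwa [map_sub, hcross d hd, sub_zero] at hv
  have hwe : planeCross a e = planeCross a w :=
    h.target_mem_of_closed (A := {v | planeCross a v = planeCross a w}) rfl (closed w)
  have hus : planeCross a s = planeCross a u :=
    h.symm.target_mem_of_closed (A := {v | planeCross a v = planeCross a u}) rfl (closed u)
  have hwe1 : e.1 = n - 1 ∧ w.1 = 0 := ⟨h.transports.map_target, h.transports.map_source⟩
  have hus2 : s.2 = n - 1 ∧ u.2 = 0 := ⟨h.transports'.map_target, h.transports'.map_source⟩
  rw [planeCross_apply, planeCross_apply, hwe1.1, hwe1.2] at hwe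
  rw [planeCross_apply, planeCross_apply, hus2.1, hus2.2] at hus
  have hmul : (e.2 - w.2) * (s.1 - u.1) = (n - 1) * (n - 1) :=
    mul_left_cancel₀ ha1.ne' <| show a.1 * _ = a.1 * _ by
      linear_combination (s.1 - u.1) * hwe - (n - 1) * hus
  have habs : |e.2 - w.2| * |s.1 - u.1| < (n - 1) * (n - 1) :=
    mul_lt_mul'' h.abs_map_sub_lt h.symm.abs_map_sub_lt (abs_nonneg _) (abs_nonneg _)
  rw [← abs_mul, hmul, abs_mul_self] at habs
  exact habs.false

lemma fired_quota (h : Crossing N c n f g w e u s) (hN : 2 ≤ #N) :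
    fired N (quota N (firedOnly N c w u) (firedOnly N c u w) + Pi.single w 1) =
      firedOnly N c w u :=
  fired_quota_firedOnly hN h.fillClosed_firedOnly h.target_mem_firedOnly

lemma relevantOnly_subset (h : Crossing N c n f g w e u s) (hN : 2 ≤ #N) :
    relevantOnly N c w e u ⊆ firedOnly N c w u := by
  intro v hv
  have he := h.target_mem_firedOnly
  rw [← h.fired_quota hN] at he ⊢
  exact hv.mem_fired he

lemma source_mem_relevantOnly (h : Crossing N c n f g w e u s) (hN : 2 ≤ #N) :
    w ∈ relevantOnly N c w e u :=
  (stable_quota (by omega)).relevant_source <| by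
    rw [h.fired_quota hN]
    exact h.target_mem_firedOnly

lemma map_lt_of_mem_relevantOnly (h : Crossing N c n f g w e u s) (hN : SpansPlane N)
    {ℓ : Vertex →+ ℤ} (hℓ : ∀ v ∈ square f g n, ℓ v < n) (hv : v ∈ relevantOnly N c w e u) :
    ℓ v < n := by
  by_cases hpos : ∀ d ∈ N, 0 < ℓ d
  · exact (hv.map_le_of_pos hN hpos).trans_lt (hℓ e h.transports.target_mem)
  · push Not at hpos
    obtain ⟨d, hd, hℓd⟩ := hpos
    exact (fillClosed_setOf_lt hd hℓd n).fired_add_single_subset (hℓ w h.transports.source_mem)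
      (fun v hv => h.eq_zero_of_notMem (mt (hℓ v) hv))
      (h.relevantOnly_subset hN.two_le_card hv).1

lemma relevantOnly_subset_square (h : Crossing N c n f g w e u s) (hN : SpansPlane N) :
    relevantOnly N c w e u ⊆ square f g n := fun v hv => by
  obtain ⟨hf, hg⟩ := h.map_nonneg_of_mem_fired (h.relevantOnly_subset hN.two_le_card hv).1
  exact ⟨⟨hf, h.map_lt_of_mem_relevantOnly hN (fun _ hv => hv.1.2) hv⟩,
    hg, h.map_lt_of_mem_relevantOnly hN (fun _ hv => hv.2.2) hv⟩

lemma separatedConf_of_mem (h : Crossing N c n f g w e u s) (hN : 2 ≤ #N)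
    (hv : v ∈ relevantOnly N c w e u) :
    separatedConf N c w e u s v = quota N (firedOnly N c w u) (firedOnly N c u w) v := by
  have hvA := h.relevantOnly_subset hN hv
  have hv' : v ∉ relevantOnly N c u s w :=
    fun hv' => notMem_firedOnly_of_mem hvA (h.symm.relevantOnly_subset hN hv')
  rw [separatedConf, Pi.add_apply, quota_of_notMem hv', add_zero, quota_of_mem hv, quota_of_mem hvA]

lemma stable_separatedConf (h : Crossing N c n f g w e u s) (hN : 2 ≤ #N) :
    Stable N (separatedConf N c w e u s) := fun v => by
  by_cases hv : v ∈ relevantOnly N c w e u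
  · exact h.separatedConf_of_mem hN hv ▸ stable_quota (by omega) v
  · exact separatedConf_of_notMem hv ▸ stable_quota (by omega) v

lemma support_separatedConf_subset (h : Crossing N c n f g w e u s) (hN : SpansPlane N) :
    Function.support (separatedConf N c w e u s) ⊆ square f g n :=
  (Function.support_add _ _).trans <| Set.union_subset
    (Set.support_indicator_subset.trans (h.relevantOnly_subset_square hN))
    (Set.support_indicator_subset.trans (square_comm ▸ h.symm.relevantOnly_subset_square hN))

theorem fired_separatedConf_subset (h : Crossing N c n f g w e u s) (hN : 2 ≤ #N) :
    fired N (separatedConf N c w e u s + Pi.single w 1) ⊆ relevantOnly N c w e u :=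
  fired_add_single_subset (h.source_mem_relevantOnly hN) fun v hv => by
    rw [separatedConf_of_notMem hv]
    by_cases hv' : v ∈ relevantOnly N c u s w
    · have hvA := notMem_firedOnly_of_mem (h.symm.relevantOnly_subset hN hv')
      exact (Nat.add_le_add_left (inDeg_mono (h.relevantOnly_subset hN)) _).trans_lt
        (quota_add_inDeg_lt (h.fillClosed_firedOnly.inDeg_lt hvA))
    · rw [quota_of_notMem hv', zero_add]
      exact fillClosed_relevantOnly.inDeg_lt hv

lemma fired_separatedConf_subset_firedOnly (h : Crossing N c n f g w e u s) (hN : 2 ≤ #N) :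
    fired N (separatedConf N c w e u s + Pi.single w 1) ⊆ firedOnly N c w u :=
  (h.fired_separatedConf_subset hN).trans (h.relevantOnly_subset hN)

lemma firesOnce_separatedConf (h : Crossing N c n f g w e u s) (hN : 2 ≤ #N) :
    FiresOnce N (separatedConf N c w e u s + Pi.single w 1) := by
  obtain ⟨d, hd, hfd⟩ := h.exists_map_pos
  exact (h.stable_separatedConf hN).firesOnce_add_single hd fun hwd =>
    h.source_sub_notMem_fired hfd (h.fired_separatedConf_subset_firedOnly hN hwd).1

theorem exists_act_separatedConf_eq (h : Crossing N c n f g w e u s) (hN : SpansPlane N) :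
    ∃ t, Act N ((sandF N)^[t] (separatedConf N c w e u s + Pi.single w 1)) = {e} := by
  have hcard := hN.two_le_card
  have he := h.target_mem_firedOnly
  rw [← h.fired_quota hcard] at he
  obtain ⟨T, hT⟩ := exists_mem_firedBefore_sdiff he
  refine ⟨T, (h.firesOnce_separatedConf hcard).act_iterate_sandF T ▸
    firedBefore_sdiff_eq_singleton hN hT (fun v hv => ?_)
      (fun v hv => h.fired_separatedConf_subset hcard hv) fun v hv => ?_⟩
  · rw [Pi.add_apply, Pi.add_apply, h.separatedConf_of_mem hcard hv]
  · have hvA (d) (hd : d ∈ N) : v - d ∈ firedOnly N c w u := h.relevantOnly_subset hcard (hv d hd)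
    have hle := card_le_quota_add_one (h.fillClosed_firedOnly v hvA) hvA
    rw [Pi.add_apply]
    omega

lemma transports_separatedConf (h : Crossing N c n f g w e u s) (hN : SpansPlane N) :
    Transports N (separatedConf N c w e u s) n f g w e where
  source_mem := h.transports.source_mem
  target_mem := h.transports.target_mem
  map_source := h.transports.map_source
  map_target := h.transports.map_target
  exists_act_eq := h.exists_act_separatedConf_eq hN
  isolated t v hv := by
    have hcard := hN.two_le_card
    rw [(h.firesOnce_separatedConf hcard).act_iterate_sandF] at hv
    exact h.map_ne_of_mem_fired
      (h.fired_separatedConf_subset_firedOnly hcard (firedBefore_subset_fired hv.1)).1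

theorem separate (h : Crossing N c n f g w e u s) (hN : SpansPlane N) :
    Crossing N (separatedConf N c w e u s) n f g w e u s where
  stable := h.stable_separatedConf hN.two_le_card
  support_subset := h.support_separatedConf_subset hN
  transports := h.transports_separatedConf hN
  transports' := separatedConf_comm (N := N) ▸ h.symm.transports_separatedConf hN

theorem disjoint_fired_separatedConf (h : Crossing N c n f g w e u s) (hN : 2 ≤ #N) :
    Disjoint (fired N (separatedConf N c w e u s + Pi.single w 1))
      (fired N (separatedConf N c w e u s + Pi.single u 1)) :=
  Set.disjoint_left.2 fun _ hv hv' =>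
    notMem_firedOnly_of_mem (h.fired_separatedConf_subset_firedOnly hN hv)
      (h.symm.fired_separatedConf_subset_firedOnly hN (separatedConf_comm (N := N) ▸ hv'))

end Crossing

end CrossingCoordinates

section Border

variable {n : ℕ} {e : ℕ → ℕ} {k : ℕ}

lemma IsUnitVec.exists_eq_single (h : IsUnitVec n e) : ∃ k < n, e = Pi.single k 1 := by
  obtain ⟨hle, hsupp, k, hk, huniq⟩ := h
  refine ⟨k, not_le.1 fun hnk => ?_, funext fun i => ?_⟩
  · rw [hsupp k hnk] at hk
    exact zero_ne_one hk
  · by_cases hi : i = k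
    · rw [hi, Pi.single_eq_same, hk]
    · have hle_i := hle i
      have hne : e i ≠ 1 := mt (huniq i) hi
      rw [Pi.single_eq_of_ne hi]
      omega

lemma isUnitVec_single (hk : k < n) : IsUnitVec n (Pi.single k 1) := by
  simp only [IsUnitVec, Pi.single_apply]
  refine ⟨fun i => ?_, fun i hi => if_neg (by omega), k, if_pos rfl, fun i hi => ?_⟩
  · split_ifs <;> omega
  · by_contra hne
    exact zero_ne_one ((if_neg hne).symm.trans hi)

lemma confW_single (hk : k < n) : confW n (Pi.single k 1) = Pi.single ((0, k) : Vertex) 1 := by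
  ext ⟨x, y⟩
  simp only [confW, Pi.single_apply, Prod.mk.injEq]
  split_ifs <;> omega

lemma confN_single (hk : k < n) : confN n (Pi.single k 1) = Pi.single ((k, 0) : Vertex) 1 := by
  ext ⟨x, y⟩
  simp only [confN, Pi.single_apply, Prod.mk.injEq]
  split_ifs <;> omega

lemma setOf_confE_single (hk : k < n) :
    {v | confE n (Pi.single k 1) v = 1} = {((n - 1, k) : Vertex)} := by
  ext ⟨x, y⟩
  simp only [confE, Pi.single_apply, Set.mem_ofPred_eq, Set.mem_singleton_iff, Prod.mk.injEq]
  split_ifs <;> simp only [true_iff, false_iff] <;> omega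

lemma setOf_confS_single (hk : k < n) :
    {v | confS n (Pi.single k 1) v = 1} = {((k, n - 1) : Vertex)} := by
  ext ⟨x, y⟩
  simp only [confS, Pi.single_apply, Set.mem_ofPred_eq, Set.mem_singleton_iff, Prod.mk.injEq]
  split_ifs <;> simp only [true_iff, false_iff] <;> omega

lemma hasSize_iff {c : Config} :
    HasSize n n c ↔ Function.support c ⊆ square (.fst ℤ ℤ) (.snd ℤ ℤ) n := by
  refine forall_congr' fun v => ?_
  rw [Function.mem_support, not_imp_comm]
  simp only [square, Set.mem_ofPred_eq, AddMonoidHom.coe_fst, AddMonoidHom.coe_snd, and_assoc]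

lemma crossingConfig_iff {N : Finset Vertex} {c : Config} {kn ke ks kw : ℕ} (hkn : kn < n)
    (hke : ke < n) (hks : ks < n) (hkw : kw < n) :
    CrossingConfig N n c (Pi.single kn 1) (Pi.single ke 1) (Pi.single ks 1) (Pi.single kw 1) ↔
      Crossing N c n (.fst ℤ ℤ) (.snd ℤ ℤ) (0, kw) (n - 1, ke) (kn, 0) (ks, n - 1) := by
  simp only [CrossingConfig, TransporterWE, TransporterNS, IsolatedWS, IsolatedNE,
    isUnitVec_single hkn, isUnitVec_single hke, isUnitVec_single hks, isUnitVec_single hkw,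
    confW_single hkw, confN_single hkn, setOf_confE_single hke, setOf_confS_single hks,
    hasSize_iff, true_and]
  constructor
  · rintro ⟨hc, hsupp, hwe, hws, hns, hne⟩
    have mem_square (x y : ℤ) (hx : 0 ≤ x ∧ x < n) (hy : 0 ≤ y ∧ y < n) :
        (x, y) ∈ square (.fst ℤ ℤ) (.snd ℤ ℤ) n := ⟨hx, hy⟩
    refine ⟨hc, hsupp, ⟨?_, ?_, rfl, rfl, hwe, hws⟩, ⟨?_, ?_, rfl, rfl, hns, hne⟩⟩
    · exact mem_square _ _ (by omega) (by omega)
    · exact mem_square _ _ (by omega) (by omega)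
    · exact square_comm ▸ mem_square _ _ (by omega) (by omega)
    · exact square_comm ▸ mem_square _ _ (by omega) (by omega)
  · rintro ⟨hc, hsupp, hwe, hns⟩
    exact ⟨hc, hsupp, hwe.exists_act_eq, hwe.isolated, hns.exists_act_eq, hns.isolated⟩

end Border

/-- if a crossing configuration exists, then one exists whose two firing
graphs are vertex-disjoint. -/
theorem stmt_4 (N : Finset Vertex) (h0 : ((0 : ℤ), (0 : ℤ)) ∉ N)
    (h : CanCross N) :
    ∃ (n : ℕ) (c : Config) (nv e s w : ℕ → ℕ), CrossingConfig N n c nv e s w ∧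
      {v : Vertex | ∃ t : ℕ, N.card ≤ (sandF N)^[t] (c + confW n w) v} ∩
      {v : Vertex | ∃ t : ℕ, N.card ≤ (sandF N)^[t] (c + confN n nv) v} = ∅ := by
  obtain ⟨n, c, nv, e, s, w, h⟩ := h
  obtain ⟨kn, hkn, rfl⟩ := h.1.exists_eq_single
  obtain ⟨ke, hke, rfl⟩ := h.2.1.exists_eq_single
  obtain ⟨ks, hks, rfl⟩ := h.2.2.1.exists_eq_single
  obtain ⟨kw, hkw, rfl⟩ := h.2.2.2.1.exists_eq_single
  rw [crossingConfig_iff hkn hke hks hkw] at h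
  have hN := h.spansPlane
  have hsep := h.separate hN
  refine ⟨n, _, _, _, _, _, (crossingConfig_iff hkn hke hks hkw).2 hsep, ?_⟩
  rw [confW_single hkw, confN_single hkn, hsep.firesOnce.setOf_unstable_eq_fired,
    hsep.symm.firesOnce.setOf_unstable_eq_fired]
  exact (h.disjoint_fired_separatedConf hN.two_le_card).inter_eq
end

section
/- Let s⁺ ⊆ ℝ² be a shape and let s' ⊆ s⁺ be nonempty and non-flat. Then for every k ∈ ℕ there exists a real r₀ > 0 such that for every real r ≥ r₀, the set N⁺_{s',r} has at least k elements. -/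
open Finset

/-!
A non-degenerate triangle has an interior point `p`. As the scale `r` grows, the grid point
`⌊p * r⌋` shifted by a fixed vector, once divided by `r`, tends to `p`. Hence any prescribed finite
pattern of vertices, translated by `⌊p * r⌋`, is eventually mapped into the shape by division by
`r`; a pattern of `k + 1` vertices leaves room for removing the origin.
-/

open Filter Topology

theorem tendsto_floor_mul_add_div_atTop {R : Type*} [TopologicalSpace R] [Field R] [LinearOrder R]
    [IsStrictOrderedRing R] [OrderTopology R] [FloorRing R] (a : R) (i : ℤ) :
    Tendsto (fun x : R => ((⌊a * x⌋ + i : ℤ) : R) / x) atTop (𝓝 a) := by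
  have rounding_error : Tendsto (fun x : R => (i - Int.fract (a * x)) / x) atTop (𝓝 0) :=
    tendsto_bdd_div_atTop_nhds_zero
      (.of_forall fun x => sub_le_sub_left (Int.fract_lt_one (a * x)).le (i : R))
      (.of_forall fun x => sub_le_self (i : R) (Int.fract_nonneg (a * x))) tendsto_id
  have decomposition : (fun x : R => a + (i - Int.fract (a * x)) / x) =ᶠ[atTop]
      fun x => ((⌊a * x⌋ + i : ℤ) : R) / x := by
    filter_upwards [eventually_ne_atTop 0] with x hx
    rw [Int.fract]
    push_cast
    field_simp
    ring
  simpa only [add_zero] using (rounding_error.const_add a).congr' decomposition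

theorem interior_convexHull_nonempty_of_not_collinear {V : Type*} [NormedAddCommGroup V]
    [NormedSpace ℝ V] (hV : Module.finrank ℝ V = 2) {a b c : V}
    (h : ¬ Collinear ℝ ({a, b, c} : Set V)) :
    (interior (convexHull ℝ ({a, b, c} : Set V))).Nonempty := by
  have : FiniteDimensional ℝ V := .of_finrank_eq_succ hV
  have span_eq_top : affineSpan ℝ (Set.range ![a, b, c]) = ⊤ :=
    (affineIndependent_iff_not_collinear_set.2 h).affineSpan_eq_top_iff_card_eq_finrank_add_one.2
      (by rw [hV, Fintype.card_fin])
  rw [interior_convexHull_nonempty_iff_affineSpan_eq_top]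
  simpa only [Matrix.range_cons, Matrix.range_empty, Set.union_empty, Set.singleton_union]
    using span_eq_top

theorem NonFlat.interior_nonempty {s : Set (ℝ × ℝ)} (hs : NonFlat s) (hne : s.Nonempty) :
    (interior s).Nonempty := by
  obtain ⟨x, hx⟩ := hne
  obtain ⟨b, c, hxbc, hsub⟩ := hs x hx
  exact (interior_convexHull_nonempty_of_not_collinear (by simp) hxbc).mono (interior_mono hsub)

/-- The point of the plane represented by a grid vertex at scale `r`, as in `shapeNbhd`. -/
noncomputable def rescale (r : ℝ) (v : Vertex) : ℝ × ℝ := (v.1 / r, v.2 / r)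

theorem shapeNbhd_eq_preimage_rescale_sdiff (s : Set (ℝ × ℝ)) (r : ℝ) :
    shapeNbhd s r = rescale r ⁻¹' s \ {0} :=
  rfl

theorem dist_rescale (r : ℝ) (u v : Vertex) :
    dist (rescale r u) (rescale r v) = dist u v / |r| := by
  simp only [rescale, Prod.dist_eq, Real.dist_eq, Int.dist_eq, ← sub_div, abs_div,
    max_div_div_right (abs_nonneg r)]

theorem antilipschitzWith_rescale {r : ℝ} (hr : r ≠ 0) : AntilipschitzWith ‖r‖₊ (rescale r) :=
  .of_le_mul_dist fun u v => by
    rw [dist_rescale, coe_nnnorm, Real.norm_eq_abs, mul_div_cancel₀ _ (abs_ne_zero.2 hr)]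

theorem finite_shapeNbhd {s : Set (ℝ × ℝ)} (hs : Bornology.IsBounded s) {r : ℝ} (hr : r ≠ 0) :
    (shapeNbhd s r).Finite := by
  have isBounded_preimage := (antilipschitzWith_rescale hr).isBounded_preimage hs
  exact (isBounded_preimage.isCompact_closure.finite_of_discrete.subset subset_closure).sdiff

theorem tendsto_rescale_floor_add (p : ℝ × ℝ) (v : Vertex) :
    Tendsto (fun r : ℝ => rescale r ((⌊p.1 * r⌋, ⌊p.2 * r⌋) + v)) atTop (𝓝 p) :=
  (tendsto_floor_mul_add_div_atTop p.1 v.1).prodMk_nhds (tendsto_floor_mul_add_div_atTop p.2 v.2)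

theorem eventually_exists_forall_rescale_add_mem {s : Set (ℝ × ℝ)} (hs : (interior s).Nonempty)
    (T : Finset Vertex) : ∀ᶠ r : ℝ in atTop, ∃ w : Vertex, ∀ v ∈ T, rescale r (w + v) ∈ s := by
  obtain ⟨p, hp⟩ := hs
  have translate_mem : ∀ᶠ r : ℝ in atTop, ∀ v ∈ T, rescale r ((⌊p.1 * r⌋, ⌊p.2 * r⌋) + v) ∈ s :=
    T.eventually_all.2 fun v _ =>
      tendsto_rescale_floor_add p v (mem_interior_iff_mem_nhds.1 hp)
  exact translate_mem.mono fun r hr => ⟨_, hr⟩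

theorem eventually_le_encard_preimage_rescale {s : Set (ℝ × ℝ)} (hs : (interior s).Nonempty)
    (k : ℕ) : ∀ᶠ r : ℝ in atTop, (k : ℕ∞) ≤ (rescale r ⁻¹' s).encard := by
  obtain ⟨T, hT⟩ := Infinite.exists_subset_card_eq Vertex k
  filter_upwards [eventually_exists_forall_rescale_add_mem hs T] with r ⟨w, hw⟩
  calc (k : ℕ∞) = ((w + ·) '' (T : Set Vertex)).encard := by
        rw [(add_right_injective w).encard_image, Set.encard_coe_eq_coe_finsetCard, hT]
    _ ≤ (rescale r ⁻¹' s).encard := Set.encard_le_encard (Set.image_subset_iff.2 hw)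

theorem eventually_le_encard_shapeNbhd {s : Set (ℝ × ℝ)} (hs : (interior s).Nonempty) (k : ℕ) :
    ∀ᶠ r : ℝ in atTop, (k : ℕ∞) ≤ (shapeNbhd s r).encard := by
  filter_upwards [eventually_le_encard_preimage_rescale hs (k + 1)] with r hr
  calc (k : ℕ∞) = ((k + 1 : ℕ) : ℕ∞) - 1 := by norm_cast
    _ ≤ (rescale r ⁻¹' s).encard - 1 := tsub_le_tsub_right hr 1
    _ ≤ (shapeNbhd s r).encard := Set.encard_tsub_one_le_encard_sdiff_singleton _ _

/-- An unbounded shape may have infinite neighborhoods, on which `Set.ncard` takes the value `0`: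
hence `Set.encard`. -/
theorem stmt_9_general (s : Set (ℝ × ℝ)) (hs : (interior s).Nonempty) (k : ℕ) :
    ∃ r₀ : ℝ, 0 < r₀ ∧ ∀ r : ℝ, r₀ ≤ r → (k : ℕ∞) ≤ (shapeNbhd s r).encard := by
  obtain ⟨r₀, hr₀, h⟩ := (atTop_basis' (1 : ℝ)).eventually_iff.1
    (eventually_le_encard_shapeNbhd hs k)
  exact ⟨r₀, one_pos.trans_le hr₀, fun r hr => h hr⟩

/-- a nonempty non-flat subset of a shape yields arbitrarily many discrete
cells for large enough scaling ratios. -/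
theorem stmt_9 (sp s' : Set (ℝ × ℝ)) (hbd : Bornology.IsBounded sp)
    (hsub : s' ⊆ sp) (hne : s'.Nonempty) (hnf : NonFlat s') (k : ℕ) :
    ∃ r₀ : ℝ, 0 < r₀ ∧ ∀ r : ℝ, r₀ ≤ r → k ≤ (shapeNbhd s' r).ncard := by
  obtain ⟨r₀, hr₀, h⟩ := stmt_9_general s' (hnf.interior_nonempty hne) k
  refine ⟨r₀, hr₀, fun r hr => ?_⟩
  have hfin := finite_shapeNbhd (hbd.subset hsub) (hr₀.trans_le hr).ne'
  simpa only [← hfin.cast_ncard_eq, Nat.cast_le] using h r hr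
end

section
/- A path joining the west and east sides of the unit square and a path joining its north and south sides must intersect: if f, g : [0,1] → [0,1]² are continuous with f(0) ∈ {0}×[0,1], f(1) ∈ {1}×[0,1], g(0) ∈ [0,1]×{0}, and g(1) ∈ [0,1]×{1}, then there exist t, s ∈ [0,1] with f(t) = g(s). -/
/-!
Parametrise the two paths by `γ` and `δ` and suppose that they do not meet. Then the complex
conjugate `F (t, u)` of `γ t - δ u` is a nowhere zero function on a square, so it has a continuous
argument `θ`. On the sides `t = 0`, `u = 0`, `t = 1`, `u = 1` it stays in the half-planes `re ≤ 0`,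
`im ≤ 0`, `0 ≤ re`, `0 ≤ im` respectively, so that `θ` stays within `π / 2` of some fixed
`n * (π / 2)`, where `n` is congruent to `2`, `3`, `0`, `1` modulo `4`. At a corner the two values
of `n` differ by at most `2`, hence by exactly `1`: going once around the square raises `n` by `4`,
although `θ` is single-valued.
-/

open Set
open scoped Real

section Argument

variable {X : Type*} [TopologicalSpace X]

theorem exists_int_forall_mem_Ioo_of_forall_ne_intCast {R : Type*} [Ring R] [LinearOrder R]
    [IsStrictOrderedRing R] [FloorRing R] [TopologicalSpace R] [OrderClosedTopology R]
    {φ : X → R} {A : Set X} (hA : IsPreconnected A) (hφ : ContinuousOn φ A)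
    (hne : ∀ x ∈ A, ∀ n : ℤ, φ x ≠ n) :
    ∃ k : ℤ, ∀ x ∈ A, φ x ∈ Ioo (k : R) (k + 1) := by
  obtain rfl | ⟨a, ha⟩ := A.eq_empty_or_nonempty
  · exact ⟨0, by simp⟩
  refine ⟨⌊φ a⌋, fun x hx ↦ ⟨?_, ?_⟩⟩
  · by_contra! hle
    obtain ⟨y, hy, hφy⟩ := hA.intermediate_value hx ha hφ ⟨hle, Int.floor_le _⟩
    exact hne y hy _ hφy
  · by_contra! hle
    obtain ⟨y, hy, hφy⟩ := hA.intermediate_value ha hx hφ ⟨(Int.lt_floor_add_one _).le, hle⟩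
    exact hne y hy (⌊φ a⌋ + 1) (by exact_mod_cast hφy)

theorem abs_le_pi_div_two_of_cos_nonneg {x : ℝ} (hx : |x| ≤ π) (hcos : 0 ≤ Real.cos x) :
    |x| ≤ π / 2 := by
  by_contra! hlt
  have hneg : Real.cos |x| < 0 :=
    Real.cos_neg_of_pi_div_two_lt_of_lt hlt (by linarith [Real.pi_pos])
  exact hneg.not_ge (Real.cos_abs x ▸ hcos)

theorem exists_int_forall_abs_sub_le_of_cos_nonneg {θ : X → ℝ} {A : Set X}
    (hA : IsPreconnected A) (hθ : ContinuousOn θ A) (j : ℤ)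
    (hcos : ∀ x ∈ A, 0 ≤ Real.cos (θ x - j * (π / 2))) :
    ∃ n : ℤ, 4 ∣ n - j ∧ ∀ x ∈ A, |θ x - n * (π / 2)| ≤ π / 2 := by
  have hπ : 0 < 2 * π := Real.two_pi_pos
  let φ (x : X) : ℝ := (θ x - j * (π / 2) + π) / (2 * π)
  have hφ_ne : ∀ x ∈ A, ∀ k : ℤ, φ x ≠ k := by
    intro x hx k hk
    have hθx : θ x - j * (π / 2) = k * (2 * π) - π :=
      eq_sub_of_add_eq ((div_eq_iff hπ.ne').mp hk)
    have hcos_x := hcos x hx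
    rw [hθx, Real.cos_int_mul_two_pi_sub_pi] at hcos_x
    linarith
  obtain ⟨k, hk⟩ := exists_int_forall_mem_Ioo_of_forall_ne_intCast hA
    (show ContinuousOn φ A by fun_prop) hφ_ne
  refine ⟨j + 4 * k, by simp, fun x hx ↦ ?_⟩
  have hshift : θ x - (j + 4 * k : ℤ) * (π / 2)
      = θ x - j * (π / 2) - k * (2 * π) := by
    push_cast; ring
  rw [hshift]
  refine abs_le_pi_div_two_of_cos_nonneg (abs_le.mpr ?_) ?_
  · have hlo := (lt_div_iff₀ hπ).mp (hk x hx).1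
    have hhi := (div_lt_iff₀ hπ).mp (hk x hx).2
    constructor <;> linarith
  · rw [Real.cos_sub_int_mul_two_pi]
    exact hcos x hx

theorem abs_sub_le_two_of_abs_sub_mul_le {R : Type*} [CommRing R] [LinearOrder R]
    [IsStrictOrderedRing R] {θ r : R} (hr : 0 < r) {m n : ℤ} (hm : |θ - m * r| ≤ r)
    (hn : |θ - n * r| ≤ r) : |m - n| ≤ 2 := by
  have hmn : |(m - n : R)| * r ≤ 2 * r :=
    calc |(m - n : R)| * r = |(m - n) * r| := by rw [abs_mul, abs_of_pos hr]
      _ = |(θ - n * r) - (θ - m * r)| := by ring_nf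
      _ ≤ |θ - n * r| + |θ - m * r| := abs_sub _ _
      _ ≤ 2 * r := by linarith
  exact_mod_cast le_of_mul_le_mul_right hmn hr

theorem exists_continuous_exp_eq [SimplyConnectedSpace X] [LocallyPathConnectedSpace X]
    {F : X → ℂ} (hF : Continuous F) (hne : ∀ x, F x ≠ 0) :
    ∃ L : X → ℂ, Continuous L ∧ ∀ x, Complex.exp (L x) = F x := by
  obtain ⟨x₀⟩ : Nonempty X := inferInstance
  obtain ⟨L, ⟨-, hL⟩, -⟩ := Complex.isCoveringMapOn_exp.existsUnique_continuousMap_lifts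
    ⟨F, hF⟩ (Complex.exp_log (hne x₀)) hne
  exact ⟨L, L.continuous, congrFun hL⟩

theorem exists_eq_zero_of_mapsTo_halfPlanes [SimplyConnectedSpace X]
    [LocallyPathConnectedSpace X] {F : X → ℂ} (hF : Continuous F) {W S E N : Set X}
    (hW : IsPreconnected W) (hS : IsPreconnected S) (hE : IsPreconnected E) (hN : IsPreconnected N)
    (hWS : (W ∩ S).Nonempty) (hSE : (S ∩ E).Nonempty) (hEN : (E ∩ N).Nonempty)
    (hNW : (N ∩ W).Nonempty) (hFW : ∀ x ∈ W, (F x).re ≤ 0) (hFS : ∀ x ∈ S, (F x).im ≤ 0)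
    (hFE : ∀ x ∈ E, 0 ≤ (F x).re) (hFN : ∀ x ∈ N, 0 ≤ (F x).im) : ∃ x, F x = 0 := by
  by_contra! hne
  obtain ⟨L, hL, hexp⟩ := exists_continuous_exp_eq hF hne
  have hθ : Continuous fun x ↦ (L x).im := Complex.continuous_im.comp hL
  simp only [← hexp, Complex.exp_re, Complex.exp_im, mul_nonneg_iff_of_pos_left (Real.exp_pos _)]
    at hFW hFS hFE hFN
  have side {A : Set X} (hA : IsPreconnected A) (j : ℤ) :=
    exists_int_forall_abs_sub_le_of_cos_nonneg hA hθ.continuousOn j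
  have hcosW (x) (hx : x ∈ W) : Real.cos (L x).im ≤ 0 :=
    nonpos_of_mul_nonpos_right (hFW x hx) (Real.exp_pos _)
  have hsinS (x) (hx : x ∈ S) : Real.sin (L x).im ≤ 0 :=
    nonpos_of_mul_nonpos_right (hFS x hx) (Real.exp_pos _)
  obtain ⟨w, hw, hWθ⟩ := side hW 2 fun x hx ↦ by
    simpa [mul_div_cancel₀] using hcosW x hx
  obtain ⟨s, hs, hSθ⟩ := side hS (-1) fun x hx ↦ by
    simpa [Real.cos_add_pi_div_two] using hsinS x hx
  obtain ⟨e, he, hEθ⟩ := side hE 0 fun x hx ↦ by simpa using hFE x hx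
  obtain ⟨n, hn, hNθ⟩ := side hN 1 fun x hx ↦ by
    simpa [Real.cos_sub_pi_div_two] using hFN x hx
  have corner {A B : Set X} (hAB : (A ∩ B).Nonempty) {k l : ℤ}
      (hA : ∀ x ∈ A, |(L x).im - k * (π / 2)| ≤ π / 2)
      (hB : ∀ x ∈ B, |(L x).im - l * (π / 2)| ≤ π / 2) : |k - l| ≤ 2 :=
    let ⟨x, hxA, hxB⟩ := hAB
    abs_sub_le_two_of_abs_sub_mul_le Real.pi_div_two_pos (hA x hxA) (hB x hxB)
  have hws := corner hWS hWθ hSθ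
  have hse := corner hSE hSθ hEθ
  have hen := corner hEN hEθ hNθ
  have hnw := corner hNW hNθ hWθ
  rw [abs_le] at hws hse hen hnw
  omega

variable {Y : Type*} [TopologicalSpace Y]

theorem exists_eq_zero_of_re_im_sign_on_sides [ContractibleSpace X] [ContractibleSpace Y]
    [LocallyPathConnectedSpace X] [LocallyPathConnectedSpace Y] {F : X × Y → ℂ}
    (hF : Continuous F) {x₀ x₁ : X} {y₀ y₁ : Y}
    (hwest : ∀ y, (F (x₀, y)).re ≤ 0) (heast : ∀ y, 0 ≤ (F (x₁, y)).re)
    (hsouth : ∀ x, (F (x, y₀)).im ≤ 0) (hnorth : ∀ x, 0 ≤ (F (x, y₁)).im) : ∃ p, F p = 0 := by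
  have vertical (x : X) : IsPreconnected ({x} ×ˢ univ : Set (X × Y)) :=
    isPreconnected_singleton.prod isPreconnected_univ
  have horizontal (y : Y) : IsPreconnected (univ ×ˢ {y} : Set (X × Y)) :=
    isPreconnected_univ.prod isPreconnected_singleton
  refine exists_eq_zero_of_mapsTo_halfPlanes hF
    (vertical x₀) (horizontal y₀) (vertical x₁) (horizontal y₁)
    ⟨(x₀, y₀), by simp⟩ ⟨(x₁, y₀), by simp⟩ ⟨(x₁, y₁), by simp⟩ ⟨(x₀, y₁), by simp⟩ ?_ ?_ ?_ ?_
  · rintro ⟨_, y⟩ ⟨rfl, -⟩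
    exact hwest y
  · rintro ⟨x, _⟩ ⟨-, rfl⟩
    exact hsouth x
  · rintro ⟨_, y⟩ ⟨rfl, -⟩
    exact heast y
  · rintro ⟨x, _⟩ ⟨-, rfl⟩
    exact hnorth x

end Argument

open unitInterval in
theorem stmt_13_general {K L : Set (ℝ × ℝ)} {w e s n : ℝ × ℝ} (hK : JoinedIn K w e)
    (hL : JoinedIn L s n) (hKy : ∀ z ∈ K, z.2 ∈ Icc s.2 n.2)
    (hLx : ∀ z ∈ L, z.1 ∈ Icc w.1 e.1) : (K ∩ L).Nonempty := by
  obtain ⟨γ, hγ⟩ := hK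
  obtain ⟨δ, hδ⟩ := hL
  have : ContractibleSpace I := (convex_Icc 0 1).contractibleSpace ⟨0, unitInterval.zero_mem⟩
  have : LocallyPathConnectedSpace I := (convex_Icc 0 1).locallyPathConnectedSpace
  let F (p : I × I) : ℂ := Complex.equivRealProdCLM.symm
    ((γ p.1).1 - (δ p.2).1, (δ p.2).2 - (γ p.1).2)
  obtain ⟨⟨t, u⟩, hF⟩ := exists_eq_zero_of_re_im_sign_on_sides (F := F) (by fun_prop)
    (x₀ := 0) (x₁ := 1) (y₀ := 0) (y₁ := 1)
    (fun u ↦ by simpa [F] using (hLx _ (hδ u)).1) (fun u ↦ by simpa [F] using (hLx _ (hδ u)).2)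
    (fun t ↦ by simpa [F] using (hKy _ (hγ t)).1) (fun t ↦ by simpa [F] using (hKy _ (hγ t)).2)
  have hmeet : γ t = δ u := by
    rw [ContinuousLinearEquiv.map_eq_zero_iff, Prod.mk_eq_zero, sub_eq_zero, sub_eq_zero] at hF
    exact Prod.ext hF.1 hF.2.symm
  exact ⟨γ t, hγ t, hmeet ▸ hδ u⟩

/-- a path joining the west and east sides of the unit square and a path
joining its south and north sides must intersect. -/
theorem stmt_13 (f g : ℝ → ℝ × ℝ)
    (hf : ContinuousOn f (Set.Icc 0 1)) (hg : ContinuousOn g (Set.Icc 0 1))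
    (hfmem : ∀ t ∈ Set.Icc (0 : ℝ) 1, f t ∈ Set.Icc (0 : ℝ) 1 ×ˢ Set.Icc (0 : ℝ) 1)
    (hgmem : ∀ t ∈ Set.Icc (0 : ℝ) 1, g t ∈ Set.Icc (0 : ℝ) 1 ×ˢ Set.Icc (0 : ℝ) 1)
    (hf0 : (f 0).1 = 0) (hf1 : (f 1).1 = 1)
    (hg0 : (g 0).2 = 0) (hg1 : (g 1).2 = 1) :
    ∃ t ∈ Set.Icc (0 : ℝ) 1, ∃ s ∈ Set.Icc (0 : ℝ) 1, f t = g s := by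
  obtain ⟨z, ⟨t, ht, rfl⟩, s, hs, hst⟩ := stmt_13_general
    (JoinedIn.ofLine hf rfl rfl Subset.rfl) (JoinedIn.ofLine hg rfl rfl Subset.rfl)
    (by rw [hg0, hg1, forall_mem_image]; exact fun t ht ↦ (hfmem t ht).2)
    (by rw [hf0, hf1, forall_mem_image]; exact fun s hs ↦ (hgmem s hs).1)
  exact ⟨t, ht, s, hs, hst.symm⟩
end
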